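/- arXiv:math/0402165 — 2 statements merged into one kernel-verified Lean document; each statement's English description precedes it below -/
import Mathlib

section
/- Let n and m be multiplicatively independent positive integers. If X ⊆ 𝕋 is a nonempty closed subset satisfying ×n(X) ⊆ X and ×m(X) ⊆ X, then either X = 𝕋 or X is finite (and in the latter case X consists of rational points). -/
lemma fb_log_dense (a b : ℝ) (ha : 0 < a) (hb : 0 < b) (h : Irrational (a / b)) (d : ℝ) (hd : 0 < d) :
    ∃ T : ℝ, ∀ y ≥ T, ∃ i j : ℕ, y ≤ i * a + j * b ∧ i * a + j * b < y + d := by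
  have hD := dense_addSubgroupClosure_pair_iff.2 h
  obtain ⟨g, hg, hg0⟩ := hD.exists_mem_open isOpen_Ioo (Set.nonempty_Ioo.2 hd)
  rw [SetLike.mem_coe, AddSubgroup.mem_closure_pair] at hg
  obtain ⟨p, q, rfl⟩ := hg
  simp only [zsmul_eq_mul] at hg0
  set g := (p:ℝ) * a + q * b with hgdef
  obtain ⟨hg0, hgd⟩ := hg0
  obtain ⟨K, hK⟩ := exists_nat_ge (b / g)
  refine ⟨K * (|(p:ℝ)| * a + |(q:ℝ)| * b), fun y hy => ?_⟩
  set T := K * (|(p:ℝ)| * a + |(q:ℝ)| * b) with hT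
  have hyT : 0 ≤ (y - T) / b := div_nonneg (by linarith) hb.le
  set c := ⌊(y - T) / b⌋₊ with hc
  have hc1 : c * b ≤ y - T := (le_div_iff₀ hb).1 (Nat.floor_le hyT)
  have hc2 : y - T < (c + 1) * b := (div_lt_iff₀ hb).1 (Nat.lt_floor_add_one _)
  set r := y - T - c * b with hr
  have hr0 : 0 ≤ r / g := div_nonneg (by linarith) hg0.le
  set j := ⌈r / g⌉₊ with hj
  have hj1 : r ≤ j * g := (div_le_iff₀ hg0).1 (Nat.le_ceil _)
  have hj2 : (j:ℝ) * g < r + g := by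
    have := Nat.ceil_lt_add_one hr0
    have := mul_lt_mul_of_pos_right this hg0
    rwa [add_mul, div_mul_cancel₀ _ hg0.ne', one_mul] at this
  have hjK : j ≤ K := by
    apply Nat.ceil_le.2
    refine le_trans ?_ hK
    gcongr
    linarith
  have hnn : ∀ s : ℤ, 0 ≤ (K:ℤ) * |s| + j * s := fun s => by
    have h1 : (j:ℤ) ≤ K := by exact_mod_cast hjK
    have h2 := neg_abs_le s
    have h3 := abs_nonneg s
    have h4 : (0:ℤ) ≤ j := by positivity
    nlinarith
  obtain ⟨i1, hi1⟩ := Int.eq_ofNat_of_zero_le (hnn p)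
  obtain ⟨i2, hi2⟩ := Int.eq_ofNat_of_zero_le (hnn q)
  have e1 : (i1:ℝ) = K * |(p:ℝ)| + j * p := by exact_mod_cast hi1.symm
  have e2 : (i2:ℝ) = K * |(q:ℝ)| + j * q := by exact_mod_cast hi2.symm
  have key : (i1:ℝ) * a + ((i2 + c : ℕ):ℝ) * b = T + c * b + j * g := by
    push_cast; rw [e1, e2, hT, hgdef]; ring
  refine ⟨i1, i2 + c, ?_, ?_⟩ <;> rw [key] <;> linarith

lemma fb_norm_le (x : ℝ) : ‖(x : UnitAddCircle)‖ ≤ |x| := by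
  rw [UnitAddCircle.norm_eq]
  simpa using round_le x 0

lemma fb_rep (x : UnitAddCircle) : ∃ u : ℝ, (u : UnitAddCircle) = x ∧ |u| = ‖x‖ := by
  induction x using QuotientAddGroup.induction_on with
  | H z =>
    refine ⟨z - round z, ?_, UnitAddCircle.norm_eq.symm⟩
    have : ((round z : ℝ) : UnitAddCircle) = 0 := by
      rw [AddCircle.coe_eq_zero_iff]; exact ⟨round z, by simp⟩
    rw [AddCircle.coe_sub, this, sub_zero]

lemma fb_inv_pow {X : Set UnitAddCircle} {n : ℕ} (h : ∀ x ∈ X, n • x ∈ X) (k : ℕ) :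
    ∀ x ∈ X, n ^ k • x ∈ X := by
  induction k with
  | zero => simp
  | succ k ih => intro x hx; rw [pow_succ, mul_smul]; exact ih _ (h x hx)

lemma fb_gt_one {n m : ℕ} (hn : 0 < n) (hm : 0 < m)
    (hi : Irrational (Real.log n / Real.log m)) : 1 < n ∧ 1 < m := by
  constructor
  · by_contra h
    have : n = 1 := by omega
    subst this; simp at hi
  · by_contra h
    have : m = 1 := by omega
    subst this; simp at hi

lemma fb_indep_pow {n m : ℕ} 
    (hi : Irrational (Real.log n / Real.log m)) (e f : ℕ) (he : 0 < e) (hf : 0 < f) :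
    Irrational (Real.log (n ^ e : ℕ) / Real.log (m ^ f : ℕ)) := by
  push_cast
  rw [Real.log_pow, Real.log_pow, mul_div_mul_comm]
  have : ((e:ℝ) / f) = ((e / f : ℚ) : ℝ) := by push_cast; rfl
  rw [this]
  exact hi.ratCast_mul (by positivity)

/-- Zero is an accumulation point. -/
lemma fb_zero_acc {n m : ℕ} (hn : 0 < n) (hm : 0 < m)
    (hi : Irrational (Real.log n / Real.log m)) {X : Set UnitAddCircle} (hc : IsClosed X)
    (hXn : ∀ x ∈ X, n • x ∈ X) (hXm : ∀ x ∈ X, m • x ∈ X)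
    (h0 : ∀ ε > 0, ∃ x ∈ X, x ≠ 0 ∧ ‖x‖ < ε) : X = Set.univ := by
  obtain ⟨hn1, hm1⟩ := fb_gt_one hn hm hi
  have hln : 0 < Real.log n := Real.log_pos (by exact_mod_cast hn1)
  have hlm : 0 < Real.log m := Real.log_pos (by exact_mod_cast hm1)
  -- main claim in positive reals
  have claim : ∀ ε > 0, ∃ η > 0, ∀ u : ℝ, 0 < u → u < η → ∀ v : ℝ, 1 ≤ v → v < 2 →
      ∃ s : ℕ, (∀ x ∈ X, s • x ∈ X) ∧ |s * u - v| < ε := by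
    intro ε hε
    obtain ⟨T, hT⟩ := fb_log_dense _ _ hln hlm hi (Real.log (1 + ε / 2))
      (Real.log_pos (by linarith))
    refine ⟨Real.exp (-T), Real.exp_pos _, fun u hu0 hu v hv1 hv2 => ?_⟩
    have hv0 : 0 < v := by linarith
    have hT' : T ≤ Real.log (v / u) := by
      rw [Real.log_div hv0.ne' hu0.ne']
      have h1 := Real.log_nonneg hv1
      have h2 : Real.log u < -T := (Real.log_lt_iff_lt_exp hu0).2 hu
      linarith
    obtain ⟨i, j, h1, h2⟩ := hT _ hT'
    have hs : (i:ℝ) * Real.log n + j * Real.log m = Real.log ((n ^ i * m ^ j : ℕ)) := by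
      push_cast
      rw [Real.log_mul (by positivity) (by positivity), Real.log_pow, Real.log_pow]
    have hspos : (0:ℝ) < ((n ^ i * m ^ j : ℕ) : ℝ) := by positivity
    refine ⟨n ^ i * m ^ j, fun x hx => ?_, ?_⟩
    · rw [mul_smul]; exact fb_inv_pow hXn _ _ (fb_inv_pow hXm _ _ hx)
    · rw [hs] at h1 h2
      rw [← Real.log_mul (by positivity) (by positivity)] at h2
      have h1' := (Real.log_le_log_iff (by positivity) hspos).1 h1
      have h2' := (Real.log_lt_log_iff hspos (by positivity)).1 h2
      rw [div_le_iff₀ hu0] at h1'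
      rw [div_mul_eq_mul_div, lt_div_iff₀ hu0] at h2'
      rw [abs_lt]; constructor <;> nlinarith
  refine Set.eq_univ_of_forall fun y => ?_
  rw [← hc.closure_eq, Metric.mem_closure_iff]
  intro ε hε
  obtain ⟨η, hη, H⟩ := claim ε hε
  obtain ⟨x, hx, hx0, hxη⟩ := h0 η hη
  obtain ⟨u, rfl, hu⟩ := fb_rep x
  have hu0 : u ≠ 0 := by rintro rfl; simp at hx0
  rw [← hu] at hxη
  have hrep : ∀ z : UnitAddCircle, ∃ v : ℝ, 1 ≤ v ∧ v < 2 ∧ (v : UnitAddCircle) = z := by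
    intro z
    have : z ∈ ((↑) : ℝ → UnitAddCircle) '' Set.Ico 1 (1 + 1) := by
      rw [AddCircle.coe_image_Ico_eq]; trivial
    obtain ⟨v, hv, rfl⟩ := this
    exact ⟨v, hv.1, by linarith [hv.2], rfl⟩
  rcases lt_or_gt_of_ne hu0 with hneg | hpos
  · obtain ⟨v, hv1, hv2, hv⟩ := hrep (-y)
    obtain ⟨s, hs, hsv⟩ := H (-u) (by linarith) (by rwa [abs_of_neg hneg] at hxη) v hv1 hv2
    refine ⟨_, hs _ hx, ?_⟩
    rw [dist_eq_norm]
    have : y - s • (u : UnitAddCircle) = ((s * (-u) - v : ℝ) : UnitAddCircle) := by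
      rw [AddCircle.coe_sub, hv, ← nsmul_eq_mul, AddCircle.coe_nsmul, AddCircle.coe_neg]
      simp [add_comm, sub_eq_add_neg]
    rw [this]; exact (fb_norm_le _).trans_lt hsv
  · obtain ⟨v, hv1, hv2, hv⟩ := hrep y
    obtain ⟨s, hs, hsv⟩ := H u hpos (by rwa [abs_of_pos hpos] at hxη) v hv1 hv2
    refine ⟨_, hs _ hx, ?_⟩
    rw [dist_comm, dist_eq_norm]
    have : s • (u : UnitAddCircle) - y = ((s * u - v : ℝ) : UnitAddCircle) := by
      rw [AddCircle.coe_sub, hv, ← nsmul_eq_mul, AddCircle.coe_nsmul]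
    rw [this]; exact (fb_norm_le _).trans_lt hsv

lemma fb_periodic {Y : Set UnitAddCircle} (hf : Y.Finite) {n : ℕ} 
    (x : UnitAddCircle) (hx : ∀ k : ℕ, n ^ k • x ∈ Y) :
    ∃ a b : ℕ, 0 < b ∧ n ^ b • (n ^ a • x) = n ^ a • x := by
  obtain ⟨a, b, hab, h⟩ := hf.exists_lt_map_eq_of_forall_mem hx
  refine ⟨a, b - a, by omega, ?_⟩
  rw [smul_smul, ← pow_add, Nat.sub_add_cancel hab.le, ← h]

/-- A finite invariant set consists of torsion points. -/
lemma fb_finite_torsion {Y : Set UnitAddCircle} (hf : Y.Finite) {n : ℕ} (hn : 1 < n)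
    (hY : ∀ x ∈ Y, n • x ∈ Y) (x : UnitAddCircle) (hx : x ∈ Y) : IsOfFinAddOrder x := by
  obtain ⟨a, b, hb, h⟩ := fb_periodic hf x (fun k => fb_inv_pow hY k x hx)
  rw [isOfFinAddOrder_iff_nsmul_eq_zero]
  have h1 : 1 < n ^ b := Nat.one_lt_pow hb.ne' hn
  refine ⟨(n ^ b - 1) * n ^ a, Nat.mul_pos (by omega) (by positivity), ?_⟩
  rw [mul_smul, ← sub_eq_zero.2 h]
  obtain ⟨c, hc⟩ : ∃ c, n ^ b = c + 1 := ⟨n ^ b - 1, by omega⟩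
  rw [hc]; simp [add_smul]

lemma fb_torsion_rat (x : UnitAddCircle) (hx : IsOfFinAddOrder x) :
    ∃ q : ℚ, x = ((q : ℝ) : UnitAddCircle) := by
  rw [isOfFinAddOrder_iff_nsmul_eq_zero] at hx
  obtain ⟨k, hk, h⟩ := hx
  obtain ⟨u, rfl, -⟩ := fb_rep x
  rw [← AddCircle.coe_nsmul, AddCircle.coe_eq_zero_iff] at h
  obtain ⟨z, hz⟩ := h
  refine ⟨z / k, ?_⟩
  congr 1
  push_cast
  rw [eq_div_iff (by positivity)]
  simp at hz
  linarith

def fbAcc (X : Set UnitAddCircle) : Set UnitAddCircle :=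
  {y | ∀ ε > 0, ∃ x ∈ X, x ≠ y ∧ ‖x - y‖ < ε}

lemma fb_acc_nonempty {X : Set UnitAddCircle} (hX : X.Infinite) : (fbAcc X).Nonempty := by
  obtain ⟨y, -, hy⟩ := hX.exists_accPt_of_subset_isCompact isCompact_univ (Set.subset_univ _)
  refine ⟨y, fun ε hε => ?_⟩
  rw [accPt_iff_nhds] at hy
  obtain ⟨x, hx, hxy⟩ := hy _ (Metric.ball_mem_nhds y hε)
  exact ⟨x, hx.2, hxy, by simpa [dist_eq_norm] using hx.1⟩

lemma fb_acc_subset {X : Set UnitAddCircle} (hc : IsClosed X) : fbAcc X ⊆ X := by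
  intro y hy
  rw [← hc.closure_eq, Metric.mem_closure_iff]
  intro ε hε
  obtain ⟨x, hx, -, h⟩ := hy ε hε
  exact ⟨x, hx, by rwa [dist_comm, dist_eq_norm]⟩

lemma fb_acc_closed (X : Set UnitAddCircle) : IsClosed (fbAcc X) := by
  rw [← closure_subset_iff_isClosed]
  intro y hy ε hε
  rw [Metric.mem_closure_iff] at hy
  by_cases hyA : y ∈ fbAcc X
  · exact hyA ε hε
  obtain ⟨z, hz, hyz⟩ := hy (ε / 2) (by linarith)
  have hne : 0 < ‖y - z‖ := by
    rw [norm_pos_iff, sub_ne_zero]; rintro rfl; exact hyA hz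
  rw [dist_eq_norm] at hyz
  obtain ⟨x, hx, hxz, h⟩ := hz (min (ε / 2) ‖y - z‖) (lt_min (by linarith) hne)
  refine ⟨x, hx, ?_, ?_⟩
  · rintro rfl; exact absurd (h.trans_le (min_le_right _ _)) (lt_irrefl _)
  · have h1 := h.trans_le (min_le_left _ _)
    have h2 := norm_sub_le_norm_sub_add_norm_sub x z y
    rw [norm_sub_rev z y] at h2
    linarith

lemma fb_smul_ne {n : ℕ} (hn : 0 < n) (x : UnitAddCircle) (hx : x ≠ 0) (h : ‖x‖ < 1 / n) :
    n • x ≠ 0 := by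
  obtain ⟨u, rfl, hu⟩ := fb_rep x
  intro h0
  rw [← AddCircle.coe_nsmul, AddCircle.coe_eq_zero_iff] at h0
  obtain ⟨z, hz⟩ := h0
  have hn' : (0:ℝ) < n := by exact_mod_cast hn
  simp at hz
  rw [← hu, lt_div_iff₀ hn'] at h
  have h1 : |(z:ℝ)| < 1 := by rw [hz, abs_mul, abs_of_pos hn']; linarith
  have h2 : z = 0 := by
    rw [← Int.abs_lt_one_iff]; exact_mod_cast h1
  rw [h2] at hz
  have : u = 0 := by
    have := hz.symm
    simpa [hn'.ne'] using this
  subst this; simp at hx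

lemma fb_acc_inv {X : Set UnitAddCircle} {n : ℕ} (hn : 0 < n) (h : ∀ x ∈ X, n • x ∈ X) :
    ∀ x ∈ fbAcc X, n • x ∈ fbAcc X := by
  intro y hy ε hε
  have hn' : (0:ℝ) < n := by exact_mod_cast hn
  obtain ⟨x, hx, hxy, hd⟩ := hy (min (1 / n) (ε / n)) (by positivity)
  refine ⟨n • x, h x hx, ?_, ?_⟩
  · rw [← sub_ne_zero, ← smul_sub]
    exact fb_smul_ne hn _ (sub_ne_zero.2 hxy) (hd.trans_le (min_le_left _ _))
  · rw [← smul_sub]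
    have h1 := (hd.trans_le (min_le_right _ _))
    rw [lt_div_iff₀ hn'] at h1
    have h2 := norm_nsmul_le (n := n) (a := x - y)
    linarith

/-- A torsion accumulation point forces everything. -/
lemma fb_torsion_acc {n m : ℕ} (hn : 0 < n) (hm : 0 < m)
    (hi : Irrational (Real.log n / Real.log m)) {X : Set UnitAddCircle} (hc : IsClosed X)
    (hXn : ∀ x ∈ X, n • x ∈ X) (hXm : ∀ x ∈ X, m • x ∈ X)
    (r : UnitAddCircle) (hr : r ∈ fbAcc X) (hrt : IsOfFinAddOrder r) : X = Set.univ := by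
  have hfin : ((AddSubmonoid.multiples r : AddSubmonoid UnitAddCircle) : Set UnitAddCircle).Finite :=
    finite_multiples.2 hrt
  obtain ⟨a, e, he, h1⟩ := fb_periodic hfin (n := n) r (fun k => ⟨n ^ k, rfl⟩)
  obtain ⟨b, f, hf, h2⟩ := fb_periodic hfin (n := m) (n ^ a • r)
    (fun k => ⟨m ^ k * n ^ a, by simp [mul_smul]⟩)
  set s := m ^ b • n ^ a • r with hs
  have hsA : s ∈ fbAcc X := fb_inv_pow (fb_acc_inv hm hXm) _ _ (fb_inv_pow (fb_acc_inv hn hXn) _ _ hr)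
  have hs1 : n ^ e • s = s := by rw [hs, smul_comm, h1]
  have key : (fun x => x + s) ⁻¹' X = Set.univ := by
    refine fb_zero_acc (n := n ^ e) (m := m ^ f) (by positivity) (by positivity)
      (fb_indep_pow hi e f he hf) (hc.preimage (by fun_prop)) ?_ ?_ ?_
    · intro x hx
      have := fb_inv_pow hXn e _ hx
      rwa [smul_add, hs1] at this
    · intro x hx
      have := fb_inv_pow hXm f _ hx
      rwa [smul_add, h2] at this
    · intro ε hε
      obtain ⟨x, hx, hxs, hd⟩ := hsA ε hε
      exact ⟨x - s, by simpa using hx, sub_ne_zero.2 hxs, hd⟩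
  refine Set.eq_univ_of_forall fun y => ?_
  have : y - s ∈ (fun x => x + s) ⁻¹' X := by rw [key]; trivial
  simpa using this

lemma fb_diff {n m : ℕ} (hn : 0 < n) (hm : 0 < m)
    (hi : Irrational (Real.log n / Real.log m)) {X : Set UnitAddCircle} (hc : IsClosed X)
    (hXn : ∀ x ∈ X, n • x ∈ X) (hXm : ∀ x ∈ X, m • x ∈ X) (hinf : X.Infinite)
    (d : UnitAddCircle) : ∃ x ∈ X, x + d ∈ X := by
  have key : (fun p : UnitAddCircle × UnitAddCircle => p.1 - p.2) '' (X ×ˢ X) = Set.univ := by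
    refine fb_zero_acc hn hm hi
      ((hc.isCompact.prod hc.isCompact).image (by fun_prop)).isClosed ?_ ?_ ?_
    · rintro _ ⟨⟨x, y⟩, ⟨hx, hy⟩, rfl⟩
      exact ⟨(n • x, n • y), ⟨hXn x hx, hXn y hy⟩, (smul_sub _ _ _).symm⟩
    · rintro _ ⟨⟨x, y⟩, ⟨hx, hy⟩, rfl⟩
      exact ⟨(m • x, m • y), ⟨hXm x hx, hXm y hy⟩, (smul_sub _ _ _).symm⟩
    · intro ε hε
      obtain ⟨y, hy⟩ := fb_acc_nonempty hinf
      obtain ⟨x, hx, hxy, hd⟩ := hy ε hε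
      exact ⟨x - y, ⟨(x, y), ⟨hx, fb_acc_subset hc hy⟩, rfl⟩, sub_ne_zero.2 hxy, hd⟩
  have : d ∈ (Set.univ : Set UnitAddCircle) := trivial
  rw [← key] at this
  obtain ⟨⟨x, y⟩, ⟨hx, hy⟩, rfl⟩ := this
  exact ⟨y, hy, by simpa using hx⟩

lemma fb_chain {n m : ℕ} (hn : 0 < n) (hm : 0 < m)
    (hi : Irrational (Real.log n / Real.log m)) {M : Set UnitAddCircle} (hc : IsClosed M)
    (hne : M.Nonempty)
    (hMn : ∀ x ∈ M, n • x ∈ M) (hMm : ∀ x ∈ M, m • x ∈ M)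
    (hnt : ∀ x ∈ M, ¬ IsOfFinAddOrder x) (d : UnitAddCircle) (hdn : n • d = d) (hdm : m • d = d)
    (k : ℕ) : ∃ x ∈ M, ∀ j ≤ k, x + j • d ∈ M := by
  suffices H : ∃ Y ⊆ M, Y.Nonempty ∧ IsClosed Y ∧ (∀ x ∈ Y, n • x ∈ Y) ∧ (∀ x ∈ Y, m • x ∈ Y) ∧
      ∀ x ∈ Y, ∀ j ≤ k, x + j • d ∈ M by
    obtain ⟨Y, hYM, ⟨x, hx⟩, -, -, -, h⟩ := H
    exact ⟨x, hYM hx, h x hx⟩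
  induction k with
  | zero => exact ⟨M, subset_rfl, hne, hc, hMn, hMm, by simp⟩
  | succ k ih =>
    obtain ⟨Y, hYM, ⟨x0, hx0⟩, hYc, hYn, hYm, h⟩ := ih
    have hinf : Y.Infinite := fun hf =>
      hnt x0 (hYM hx0) (fb_finite_torsion hf (fb_gt_one hn hm hi).1 hYn x0 hx0)
    obtain ⟨x, hx, hxd⟩ := fb_diff hn hm hi hYc hYn hYm hinf d
    refine ⟨Y ∩ (fun x => x + d) ⁻¹' Y, fun x hx => hYM hx.1, ⟨x, hx, hxd⟩,
      hYc.inter (hYc.preimage (by fun_prop)), ?_, ?_, ?_⟩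
    · rintro x ⟨hx, hx'⟩
      refine ⟨hYn x hx, ?_⟩
      have := hYn _ hx'
      rwa [smul_add, hdn] at this
    · rintro x ⟨hx, hx'⟩
      refine ⟨hYm x hx, ?_⟩
      have := hYm _ hx'
      rwa [smul_add, hdm] at this
    · rintro x ⟨hx, hx'⟩ j hj
      rcases Nat.eq_zero_or_pos j with rfl | hj0
      · simpa using hYM hx
      · obtain ⟨i, rfl⟩ : ∃ i, j = i + 1 := ⟨j - 1, by omega⟩
        have := h _ hx' i (by omega)
        rwa [add_assoc, ← succ_nsmul'] at this

lemma fb_fix (n t : ℕ) (ht : 0 < t) (hco : Nat.Coprime n t) (hn : 0 < n) :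
    n ^ (Nat.totient t) • ((1 / t : ℝ) : UnitAddCircle) = ((1 / t : ℝ) : UnitAddCircle) := by
  have h := Nat.ModEq.pow_totient hco
  obtain ⟨c, hc⟩ := (Nat.modEq_iff_dvd' (Nat.one_le_pow _ _ hn)).1 h.symm
  have hc' : n ^ (Nat.totient t) = c * t + 1 := by
    have := Nat.one_le_pow (Nat.totient t) n hn
    rw [mul_comm c]; omega
  have ht' : (t:ℝ) ≠ 0 := by positivity
  have h1 : t • ((1 / t : ℝ) : UnitAddCircle) = 0 := by
    rw [← AddCircle.coe_nsmul, AddCircle.coe_eq_zero_iff]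
    exact ⟨1, by simp [ht']⟩
  rw [hc', add_smul, mul_smul, h1]; simp

lemma fb_has_torsion {n m : ℕ} (hn : 0 < n) (hm : 0 < m)
    (hi : Irrational (Real.log n / Real.log m)) {M : Set UnitAddCircle} (hc : IsClosed M)
    (hne : M.Nonempty)
    (hMn : ∀ x ∈ M, n • x ∈ M) (hMm : ∀ x ∈ M, m • x ∈ M) : ∃ x ∈ M, IsOfFinAddOrder x := by
  by_contra! hnt
  have hM0 : (0 : UnitAddCircle) ∈ M := by
    rw [← hc.closure_eq, Metric.mem_closure_iff]
    intro ε hε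
    obtain ⟨N, hN⟩ := exists_nat_gt (1 / ε)
    set t := n * m * N + 1 with ht
    have ht0 : 0 < t := by omega
    have htN : N ≤ t := by
      have : 1 * N ≤ n * m * N := Nat.mul_le_mul_right _ (Nat.mul_pos hn hm)
      omega
    have htpos : (0:ℝ) < t := by exact_mod_cast ht0
    have hte : 1 / (t:ℝ) < ε := by
      rw [div_lt_comm₀ htpos hε]
      exact hN.trans_le (by exact_mod_cast htN)
    have hcn : Nat.Coprime n t := by
      rw [ht, mul_assoc]; simp
    have hcm : Nat.Coprime m t := by
      rw [ht, mul_comm n m, mul_assoc]; simp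
    have htot : 0 < Nat.totient t := Nat.totient_pos.2 ht0
    obtain ⟨x, hx, hxj⟩ := fb_chain (n := n ^ Nat.totient t) (m := m ^ Nat.totient t)
      (by positivity) (by positivity) (fb_indep_pow hi _ _ htot htot) hc hne
      (fb_inv_pow hMn _) (fb_inv_pow hMm _) hnt _ (fb_fix n t ht0 hcn hn) (fb_fix m t ht0 hcm hm) t
    have hrep : -x ∈ ((↑) : ℝ → UnitAddCircle) '' Set.Ico 0 (0 + 1) := by
      rw [AddCircle.coe_image_Ico_eq]; trivial
    obtain ⟨v, ⟨hv0, hv1⟩, hv⟩ := hrep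
    have hvt : 0 ≤ v * t := by positivity
    have hj1 := Nat.floor_le hvt
    have hj2 := Nat.lt_floor_add_one (v * t)
    set j := ⌊v * t⌋₊ with hj
    have hjt : j ≤ t := by
      have : (j:ℝ) ≤ t := by nlinarith
      exact_mod_cast this
    refine ⟨_, hxj j hjt, ?_⟩
    rw [dist_eq_norm]
    have e : (0:UnitAddCircle) - (x + j • ((1 / t : ℝ) : UnitAddCircle)) = ((v - j * (1 / t) : ℝ) : UnitAddCircle) := by
      rw [AddCircle.coe_sub, hv, ← nsmul_eq_mul, AddCircle.coe_nsmul]; abel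
    rw [e]
    refine (fb_norm_le _).trans_lt (lt_of_le_of_lt ?_ hte)
    have e2 : v - j * (1 / t) = (v * t - j) / t := by field_simp
    rw [e2, abs_div, abs_of_pos htpos]
    gcongr
    rw [abs_le]; constructor <;> linarith
  exact hnt 0 hM0 IsOfFinAddOrder.zero


/-- Furstenberg: Let `n` and `m` be multiplicatively independent positive
integers.  If `X ⊆ 𝕋` is a nonempty closed subset with `×n(X) ⊆ X` and `×m(X) ⊆ X`, then
either `X = 𝕋` or `X` is finite, and in the latter case `X` consists of rational points. -/
theorem furstenberg_times_n_times_m_closed_invariant_sets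
    (n m : ℕ) (hn : 0 < n) (hm : 0 < m)
    (hindep : Irrational (Real.log n / Real.log m))
    (X : Set UnitAddCircle) (hX : X.Nonempty) (hXclosed : IsClosed X)
    (hXn : (fun x : UnitAddCircle => n • x) '' X ⊆ X)
    (hXm : (fun x : UnitAddCircle => m • x) '' X ⊆ X) :
    X = Set.univ ∨ (X.Finite ∧ ∀ x ∈ X, ∃ q : ℚ, x = ((q : ℝ) : UnitAddCircle)) := by

  have hXn' : ∀ x ∈ X, n • x ∈ X := fun x hx => hXn ⟨x, hx, rfl⟩
  have hXm' : ∀ x ∈ X, m • x ∈ X := fun x hx => hXm ⟨x, hx, rfl⟩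
  by_cases hf : X.Finite
  · exact Or.inr ⟨hf, fun x hx => fb_torsion_rat x
      (fb_finite_torsion hf (fb_gt_one hn hm hindep).1 hXn' x hx)⟩
  · left
    obtain ⟨r, hr, hrt⟩ := fb_has_torsion hn hm hindep (fb_acc_closed X) (fb_acc_nonempty hf)
      (fb_acc_inv hn hXn') (fb_acc_inv hm hXm')
    exact fb_torsion_acc hn hm hindep hXclosed hXn' hXm' r hr hrt
end

section
/- Let m and n be relatively prime integers, each at least 2, and let μ be a Borel probability measure on 𝕋 that is invariant and ergodic under the multiplicative semigroup of maps generated by ×n and ×m. If the measure-theoretic entropy h_μ(×n) of the single transformation ×n is positive, then μ is Lebesgue measure on 𝕋. -/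
open MeasureTheory ENNReal

section Entropy

variable {α : Type*} [MeasurableSpace α]

/-- `P : Fin m → Set α` is a finite measurable partition of `α` modulo `μ`-null sets. -/
def IsFinMeasPartition (μ : Measure α) {m : ℕ} (P : Fin m → Set α) : Prop :=
  (∀ i, MeasurableSet (P i)) ∧ Pairwise (Function.onFun Disjoint P) ∧ μ (⋃ i, P i)ᶜ = 0

/-- Shannon entropy (information) of a finite family of sets with respect to `μ`. -/
noncomputable def finPartitionEntropy (μ : Measure α) {ι : Type*} [Fintype ι]
    (P : ι → Set α) : ℝ≥0∞ :=
  ENNReal.ofReal (∑ i, Real.negMulLog ((μ (P i)).toReal))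

/-- The common refinement `P ∨ T⁻¹ P ∨ ⋯ ∨ T^{-(n-1)} P`, indexed by `Fin n → Fin m`. -/
def refinedPartition (T : α → α) {m : ℕ} (P : Fin m → Set α) (n : ℕ) :
    (Fin n → Fin m) → Set α :=
  fun f => ⋂ i : Fin n, T^[(i : ℕ)] ⁻¹' P (f i)

/-- The measure-theoretic (Kolmogorov–Sinai) entropy `h_μ(T)` of a transformation `T`
preserving `μ`, defined as the supremum over all finite measurable partitions `P` of
`inf_n H_μ(P ∨ T⁻¹P ∨ ⋯ ∨ T^{-n}P)/(n+1)` (by subadditivity this infimum equals the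
usual limit). -/
noncomputable def ksEntropy (T : α → α) (μ : Measure α) : ℝ≥0∞ :=
  ⨆ (m : ℕ) (P : Fin m → Set α) (_ : IsFinMeasPartition μ P),
    ⨅ n : ℕ, finPartitionEntropy μ (refinedPartition T P (n + 1)) / (n + 1 : ℝ≥0∞)

end Entropy

open MeasureTheory


theorem rud_nt (n N : ℕ) (b : ℤ) (h1 : (n : ℤ) ∣ b - 1) (h2 : 2 ∣ n → (4 : ℤ) ∣ b - 1)
    (l : ℤ) (k : ℕ) (h : ((n ^ N : ℕ) : ℤ) ∣ l * (b ^ k - 1)) :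
    ((n ^ N : ℕ) : ℤ) ∣ l * ((b - 1) * k) := by
  rw [Int.natCast_dvd] at h ⊢
  rw [Nat.dvd_iff_prime_pow_dvd_dvd] at h ⊢
  intro p j hp hpj
  have h3 := h p j hp hpj
  rcases Nat.eq_zero_or_pos j with rfl | hj
  · simp
  have hpn : p ∣ n := hp.dvd_of_dvd_pow ((dvd_pow_self p hj.ne').trans hpj)
  have hpb : (p : ℤ) ∣ b - 1 := (Int.natCast_dvd_natCast.mpr hpn).trans h1
  have hpZ : Prime (p : ℤ) := Nat.prime_iff_prime_int.mp hp
  have hnb : ¬ (p : ℤ) ∣ b := by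
    intro hb
    have : (p : ℤ) ∣ 1 := by simpa using dvd_sub hb hpb
    exact hpZ.not_dvd_one this
  have key : emultiplicity (p : ℤ) (b ^ k - 1) = emultiplicity (p : ℤ) ((b - 1) * k) := by
    rw [emultiplicity_mul hpZ]
    rcases hp.eq_two_or_odd' with rfl | hodd
    · have := Int.two_pow_sub_pow' (x := b) (y := 1) k (h2 hpn) (by simpa using hnb)
      simpa using this
    · have := Int.emultiplicity_pow_sub_pow hp hodd (x := b) (y := 1) hpb hnb k
      rw [← Int.natCast_emultiplicity] at this
      simpa using this
  have h4 : ((p ^ j : ℕ) : ℤ) ∣ l * (b ^ k - 1) := Int.natCast_dvd.mpr h3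
  rw [← Int.natCast_dvd]
  push_cast at h4 ⊢
  rw [pow_dvd_iff_le_emultiplicity, emultiplicity_mul hpZ] at h4 ⊢
  rwa [← key]

theorem rud_nt2 (n N : ℕ) (b : ℕ) (hcop : Nat.Coprime b n)
    (h1 : (n : ℤ) ∣ (b : ℤ) - 1) (h2 : 2 ∣ n → (4 : ℤ) ∣ (b : ℤ) - 1)
    (l : ℤ) (i j : ℕ) (h : ((n ^ N : ℕ) : ℤ) ∣ l * ((b : ℤ) ^ i - (b : ℤ) ^ j)) :
    ((n ^ N : ℕ) : ℤ) ∣ l * ((b : ℤ) - 1) * ((i : ℤ) - j) := by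
  wlog hij : j ≤ i generalizing i j
  · have e1 : l * ((b : ℤ) ^ j - (b : ℤ) ^ i) = -(l * ((b : ℤ) ^ i - (b : ℤ) ^ j)) := by ring
    have e2 : l * ((b : ℤ) - 1) * ((i : ℤ) - j) = -(l * ((b : ℤ) - 1) * ((j : ℤ) - i)) := by ring
    have := this j i (by rw [e1, dvd_neg]; exact h) (by omega)
    rw [e2, dvd_neg]; exact this
  obtain ⟨k, rfl⟩ := Nat.exists_eq_add_of_le hij
  have hc : IsCoprime ((n ^ N : ℕ) : ℤ) ((b : ℤ) ^ j) := by
    have : Nat.Coprime (n ^ N) (b ^ j) := (hcop.pow j N).symm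
    exact_mod_cast Nat.isCoprime_iff_coprime.mpr this
  have h3 : ((n ^ N : ℕ) : ℤ) ∣ (b : ℤ) ^ j * (l * ((b : ℤ) ^ k - 1)) := by
    convert h using 1; ring
  have := rud_nt n N b h1 h2 l k (hc.dvd_of_dvd_mul_left h3)
  convert this using 1; push_cast; ring

theorem rud_count (L : ℕ) (hL : 0 < L) (D : ℤ) (hD : D ≠ 0) (j : ℕ) (hj : j < L) :
    ((Finset.range L).filter (fun i : ℕ => (L : ℤ) ∣ D * ((i : ℤ) - j))).card ≤ 2 * D.natAbs := by
  have hLz : (0 : ℤ) < L := by exact_mod_cast hL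
  have hD0 : 0 < |D| := abs_pos.mpr hD
  have : ((Finset.range L).filter (fun i : ℕ => (L : ℤ) ∣ D * ((i : ℤ) - j))).card
      ≤ (Finset.Ioo (-|D|) |D|).card := by
    apply Finset.card_le_card_of_injOn (fun i : ℕ => D * ((i : ℤ) - j) / L)
    · intro i hi
      simp only [Finset.coe_filter, Finset.mem_range, Set.mem_ofPred_eq] at hi
      obtain ⟨hi, t, ht⟩ := hi
      simp only [Finset.coe_Ioo, Set.mem_Ioo]
      rw [ht, Int.mul_ediv_cancel_left _ hLz.ne', ← abs_lt]
      have h1 : |(i : ℤ) - j| < L := by rw [abs_lt]; constructor <;> omega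
      have h2 : |D| * |(i : ℤ) - j| = L * |t| := by
        rw [← abs_mul, ht, abs_mul, abs_of_pos hLz]
      by_contra hcon
      push Not at hcon
      nlinarith [abs_nonneg ((i : ℤ) - j)]
    · intro i hi i' hi' heq
      simp only [Finset.coe_filter, Finset.mem_range, Set.mem_ofPred_eq] at hi hi'
      obtain ⟨-, t, ht⟩ := hi
      obtain ⟨-, t', ht'⟩ := hi'
      simp only [ht, ht', Int.mul_ediv_cancel_left _ hLz.ne'] at heq
      subst heq
      have : D * ((i : ℤ) - j) = D * ((i' : ℤ) - j) := by rw [ht, ht']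
      have := mul_left_cancel₀ hD this
      omega
  refine this.trans ?_
  rw [Int.card_Ioo, Int.abs_eq_natAbs]
  omega


/-- representative in [0,1) -/
noncomputable def rudRep (x : UnitAddCircle) : ℝ := (AddCircle.equivIco 1 0 x : ℝ)

theorem rudRep_meas : Measurable rudRep :=
  measurable_subtype_coe.comp (AddCircle.measurableEquivIco (1 : ℝ) 0).measurable

theorem rudRep_nonneg (x : UnitAddCircle) : 0 ≤ rudRep x := (AddCircle.equivIco 1 0 x).2.1
theorem rudRep_lt (x : UnitAddCircle) : rudRep x < 1 := by
  have := (AddCircle.equivIco (1 : ℝ) 0 x).2.2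
  have h2 : rudRep x < 0 + 1 := this
  linarith
theorem rudRep_coe (x : UnitAddCircle) : ((rudRep x : ℝ) : UnitAddCircle) = x :=
  (AddCircle.equivIco (1 : ℝ) 0).symm_apply_apply x
theorem rudRep_of_coe (r : ℝ) : rudRep (r : UnitAddCircle) = Int.fract r := by
  unfold rudRep
  rw [AddCircle.coe_equivIco_mk_apply]
  simp
theorem rudRep_nsmul (n : ℕ) (x : UnitAddCircle) : rudRep (n • x) = Int.fract (n * rudRep x) := by
  conv_lhs => rw [← rudRep_coe x]
  rw [← rudRep_of_coe]
  congr 1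
  rw [← nsmul_eq_mul]
  rfl

theorem rud_coe_int (k : ℤ) : ((k : ℝ) : UnitAddCircle) = 0 := by
  rw [AddCircle.coe_eq_zero_iff]
  exact ⟨k, by simp⟩

theorem rud_smul_meas (n : ℕ) : Measurable (fun x : UnitAddCircle => n • x) :=
  (continuous_const_smul n).measurable

/-- inverse branches -/
noncomputable def rudSec (n k : ℕ) (y : UnitAddCircle) : UnitAddCircle :=
  (((rudRep y + k) / n : ℝ) : UnitAddCircle)

theorem rudSec_meas (n k : ℕ) : Measurable (rudSec n k) :=
  AddCircle.measurable_mk'.comp ((rudRep_meas.add_const _).div_const _)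

theorem rudSec_smul (n k : ℕ) (hn : n ≠ 0) (y : UnitAddCircle) : n • rudSec n k y = y := by
  have hn' : (n : ℝ) ≠ 0 := by exact_mod_cast hn
  unfold rudSec
  rw [← AddCircle.coe_nsmul, nsmul_eq_mul, mul_div_cancel₀ _ hn', AddCircle.coe_add, rudRep_coe]
  have := rud_coe_int k
  simp only [Int.cast_natCast] at this
  rw [this, add_zero]

/-- cell index at level `j` -/
noncomputable def rudCell (n : ℕ) (j : ℕ) (x : UnitAddCircle) : ℕ := ⌊(n : ℝ) ^ j * rudRep x⌋₊

theorem rudCell_lt (n j : ℕ) (hn : n ≠ 0) (x : UnitAddCircle) : rudCell n j x < n ^ j := by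
  unfold rudCell
  rw [Nat.floor_lt (mul_nonneg (by positivity) (rudRep_nonneg x))]
  push_cast
  have : (0 : ℝ) < (n : ℝ) ^ j := by positivity
  nlinarith [rudRep_lt x]

theorem rudCell_meas (n j : ℕ) : Measurable (rudCell n j) :=
  Nat.measurable_floor.comp (rudRep_meas.const_mul _)

theorem rudCell_one_floor (n : ℕ) (x : UnitAddCircle) :
    (rudCell n 1 x : ℝ) + rudRep (n • x) = n * rudRep x := by
  rw [rudRep_nsmul]
  unfold rudCell
  rw [pow_one]
  have h0 : 0 ≤ (n : ℝ) * rudRep x := mul_nonneg (by positivity) (rudRep_nonneg x)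
  rw [natCast_floor_eq_intCast_floor h0]
  exact Int.floor_add_fract _

theorem rudSec_cell (n : ℕ) (hn : n ≠ 0) (x : UnitAddCircle) :
    rudSec n (rudCell n 1 x) (n • x) = x := by
  have hn' : (n : ℝ) ≠ 0 := by exact_mod_cast hn
  unfold rudSec
  rw [add_comm, rudCell_one_floor, mul_div_cancel_left₀ _ hn', rudRep_coe]

theorem rudCell_succ (n j : ℕ) (x : UnitAddCircle) :
    rudCell n (j + 1) x = rudCell n 1 x * n ^ j + rudCell n j (n • x) := by
  conv_lhs => unfold rudCell
  rw [pow_succ, mul_assoc, ← rudCell_one_floor, mul_add]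
  have : (n : ℝ) ^ j * (rudCell n 1 x : ℝ) = ((rudCell n 1 x * n ^ j : ℕ) : ℝ) := by
    push_cast; ring
  rw [this, add_comm, Nat.floor_add_natCast (mul_nonneg (by positivity) (rudRep_nonneg _)), add_comm]
  rfl

theorem rudCell_div (n K N : ℕ) (hn : n ≠ 0) (x : UnitAddCircle) :
    rudCell n (N + K) x / n ^ N = rudCell n K x := by
  have hn' : (n : ℝ) ^ N ≠ 0 := by positivity
  unfold rudCell
  rw [← Nat.floor_div_natCast]
  congr 1
  push_cast
  rw [pow_add]
  field_simp

theorem rudCell_dist (n j : ℕ) (hn : n ≠ 0) (x y : UnitAddCircle) (h : rudCell n j x = rudCell n j y) :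
    dist x y ≤ 1 / (n : ℝ) ^ j := by
  have hn' : (0 : ℝ) < (n : ℝ) ^ j := by positivity
  have hx := Nat.floor_le (mul_nonneg hn'.le (rudRep_nonneg x))
  have hy := Nat.floor_le (mul_nonneg hn'.le (rudRep_nonneg y))
  have hx' := Nat.lt_floor_add_one ((n : ℝ) ^ j * rudRep x)
  have hy' := Nat.lt_floor_add_one ((n : ℝ) ^ j * rudRep y)
  unfold rudCell at h
  rw [h] at hx hx'
  have h1 : |rudRep x - rudRep y| ≤ 1 / (n : ℝ) ^ j := by
    rw [le_div_iff₀ hn', show |rudRep x - rudRep y| * (n : ℝ) ^ j = |(rudRep x - rudRep y) * (n : ℝ) ^ j| by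
      rw [abs_mul, abs_of_pos hn'], abs_le]
    constructor <;> nlinarith
  refine le_trans ?_ h1
  conv_lhs => rw [← rudRep_coe x, ← rudRep_coe y]
  rw [dist_eq_norm, ← AddCircle.coe_sub]
  have := UnitAddCircle.norm_eq (x := rudRep x - rudRep y)
  rw [this]
  simpa using round_le (rudRep x - rudRep y) 0

/-- transfer dual operator -/
noncomputable def rudL (n : ℕ) (ν : Measure UnitAddCircle) : Measure UnitAddCircle :=
  ∑ k ∈ Finset.range n, ν.map (rudSec n k)

instance rudL_fin (n : ℕ) (ν : Measure UnitAddCircle) [IsFiniteMeasure ν] :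
    IsFiniteMeasure (rudL n ν) := by
  unfold rudL; infer_instance

theorem rudL_apply (n : ℕ) (ν : Measure UnitAddCircle) {B : Set UnitAddCircle} (hB : MeasurableSet B) :
    rudL n ν B = ∑ k ∈ Finset.range n, ν (rudSec n k ⁻¹' B) := by
  unfold rudL
  rw [Measure.finsetSum_apply]
  refine Finset.sum_congr rfl fun k _ => ?_
  rw [Measure.map_apply (rudSec_meas n k) hB]

theorem rudL_withDensity (n : ℕ) (hn : n ≠ 0) (ν : Measure UnitAddCircle) {f : UnitAddCircle → ℝ≥0∞}
    (hf : Measurable f) :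
    rudL n (ν.withDensity f) = (rudL n ν).withDensity (fun x => f (n • x)) := by
  have hfT : Measurable (fun x : UnitAddCircle => f (n • x)) := hf.comp (rud_smul_meas n)
  ext B hB
  rw [rudL_apply n _ hB, withDensity_apply _ hB]
  unfold rudL
  rw [← lintegral_indicator hB, lintegral_finsetSum_measure]
  refine Finset.sum_congr rfl fun k _ => ?_
  rw [lintegral_indicator hB, withDensity_apply _ (rudSec_meas n k hB), setLIntegral_map hB hfT (rudSec_meas n k)]
  simp only [rudSec_smul n k hn]

theorem rudL_mono (n : ℕ) {ν ν' : Measure UnitAddCircle} (h : ν ≤ ν') : rudL n ν ≤ rudL n ν' := by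
  rw [Measure.le_iff]
  intro B hB
  rw [rudL_apply n _ hB, rudL_apply n _ hB]
  exact Finset.sum_le_sum fun k _ => h _

theorem rudL_le (n : ℕ) (hn : n ≠ 0) (μ : Measure UnitAddCircle)
    (hinv : Measure.map (fun x : UnitAddCircle => n • x) μ = μ) : μ ≤ rudL n μ := by
  rw [Measure.le_iff]
  intro B hB
  rw [rudL_apply n _ hB]
  have h1 : ∀ k, μ (rudSec n k ⁻¹' B) = μ {x | rudSec n k (n • x) ∈ B} := by
    intro k
    conv_lhs => rw [← hinv]
    rw [Measure.map_apply (rud_smul_meas n) (rudSec_meas n k hB)]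
    rfl
  simp only [h1]
  refine le_trans (measure_mono ?_) (measure_biUnion_finset_le _ _)
  intro x hx
  simp only [Set.mem_iUnion, Finset.mem_range]
  refine ⟨rudCell n 1 x, by simpa using rudCell_lt n 1 hn x, ?_⟩
  change rudSec n (rudCell n 1 x) (n • x) ∈ B
  rwa [rudSec_cell n hn]

theorem rud_fourier_sec (n k : ℕ) (hn : n ≠ 0) (l : ℤ) (y : UnitAddCircle) :
    (fourier l (rudSec n k y) : ℂ) = fourier l (rudSec n 0 y) *
      (Complex.exp (2 * Real.pi * Complex.I * (l / n))) ^ k := by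
  unfold rudSec
  rw [fourier_coe_apply, fourier_coe_apply, ← Complex.exp_nat_mul, ← Complex.exp_add]
  congr 1
  have : (n : ℂ) ≠ 0 := by exact_mod_cast hn
  push_cast
  field_simp
  ring

theorem rud_fourier_sum (n : ℕ) (hn : n ≠ 0) (l : ℤ) (hl : ¬ (n : ℤ) ∣ l) (y : UnitAddCircle) :
    ∑ k ∈ Finset.range n, (fourier l (rudSec n k y) : ℂ) = 0 := by
  have hnC : (n : ℂ) ≠ 0 := by exact_mod_cast hn
  rw [Finset.sum_congr rfl (fun k _ => rud_fourier_sec n k hn l y), ← Finset.mul_sum]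
  set z := Complex.exp (2 * Real.pi * Complex.I * (l / n)) with hz
  have hz1 : z ≠ 1 := by
    intro h
    rw [hz, Complex.exp_eq_one_iff] at h
    obtain ⟨t, ht⟩ := h
    apply hl
    refine ⟨t, ?_⟩
    have h2 : (l : ℂ) / n = t := by
      have := Complex.two_pi_I_ne_zero
      apply mul_left_cancel₀ this
      rw [ht]; ring
    rw [div_eq_iff hnC] at h2
    have : (l : ℂ) = ((n * t : ℤ) : ℂ) := by rw [h2]; push_cast; ring
    exact_mod_cast this
  have hzn : z ^ n = 1 := by
    rw [hz, ← Complex.exp_nat_mul, Complex.exp_eq_one_iff]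
    refine ⟨l, ?_⟩
    field_simp
  have := geom_sum_mul z n
  rw [hzn, sub_self] at this
  rw [(mul_eq_zero.mp this).resolve_right (sub_ne_zero.mpr hz1), mul_zero]

theorem rud_fourier_nsmul (n : ℕ) (l : ℤ) (x : UnitAddCircle) :
    (fourier l (n • x) : ℂ) = fourier (n * l) x := by
  rw [fourier_apply, fourier_apply, mul_comm, mul_smul, natCast_zsmul]

theorem rud_fourier_int (ν : Measure UnitAddCircle) [IsFiniteMeasure ν] (l : ℤ) :
    Integrable (fun x => (fourier l x : ℂ)) ν :=
  (integrable_const (1 : ℝ)).mono' (fourier l).continuous.aestronglyMeasurable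
    (by filter_upwards with x; exact (Circle.norm_coe _).le)

theorem rudL_fourier (n : ℕ) (ν : Measure UnitAddCircle) [IsFiniteMeasure ν] (l : ℤ) :
    ∫ x, (fourier l x : ℂ) ∂(rudL n ν) = ∫ y, ∑ k ∈ Finset.range n, (fourier l (rudSec n k y) : ℂ) ∂ν := by
  unfold rudL
  rw [integral_finsetSum_measure (fun k _ => rud_fourier_int _ l), integral_finsetSum]
  · refine Finset.sum_congr rfl fun k _ => ?_
    rw [integral_map (rudSec_meas n k).aemeasurable (fourier l).continuous.aestronglyMeasurable]
  · intro k _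
    have := rud_fourier_int (ν.map (rudSec n k)) l
    exact this.comp_measurable (rudSec_meas n k)

theorem rudL_fourier_ndvd (n : ℕ) (hn : n ≠ 0) (ν : Measure UnitAddCircle) [IsFiniteMeasure ν] (l : ℤ)
    (hl : ¬ (n : ℤ) ∣ l) : ∫ x, (fourier l x : ℂ) ∂(rudL n ν) = 0 := by
  rw [rudL_fourier]
  simp only [rud_fourier_sum n hn l hl, integral_zero]

theorem rudL_fourier_dvd (n : ℕ) (hn : n ≠ 0) (ν : Measure UnitAddCircle) [IsFiniteMeasure ν] (l : ℤ) :
    ∫ x, (fourier (n * l) x : ℂ) ∂(rudL n ν) = n * ∫ x, (fourier l x : ℂ) ∂ν := by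
  rw [rudL_fourier]
  simp only [← rud_fourier_nsmul, rudSec_smul n _ hn]
  simp only [Finset.sum_const, Finset.card_range, nsmul_eq_mul, integral_const_mul]

theorem rud_ext (μ ν : Measure UnitAddCircle) [IsFiniteMeasure μ] [IsFiniteMeasure ν]
    (h : ∀ l : ℤ, ∫ x, (fourier l x : ℂ) ∂μ = ∫ x, (fourier l x : ℂ) ∂ν) : μ = ν := by
  let A : StarSubalgebra ℂ (BoundedContinuousFunction UnitAddCircle ℂ) :=
    (fourierSubalgebra (T := (1 : ℝ))).comap (BoundedContinuousFunction.toContinuousMapStarₐ ℂ)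
  have hmem : ∀ f : C(UnitAddCircle, ℂ), f ∈ Submodule.span ℂ (Set.range (@fourier (1 : ℝ))) →
      ∫ x, f x ∂μ = ∫ x, f x ∂ν := by
    intro f hf'
    induction hf' using Submodule.span_induction with
    | mem x hx => obtain ⟨l, rfl⟩ := hx; exact h l
    | zero => simp
    | add f g hf hg h1 h2 =>
      have i1 : ∀ (ρ : Measure UnitAddCircle) [IsFiniteMeasure ρ] (f : C(UnitAddCircle, ℂ)),
          Integrable (fun x => f x) ρ := fun ρ _ f =>
        (integrable_const (‖f‖ : ℝ)).mono' f.continuous.aestronglyMeasurable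
          (by filter_upwards with x using f.norm_coe_le_norm x)
      simp only [ContinuousMap.add_apply]
      rw [integral_add (i1 _ f) (i1 _ g), integral_add (i1 _ f) (i1 _ g), h1, h2]
    | smul a f hf h1 =>
      simp only [ContinuousMap.smul_apply]
      rw [integral_smul, integral_smul, h1]
  refine ext_of_forall_mem_subalgebra_integral_eq_of_polish (𝕜 := ℂ) (A := A) ?_ ?_
  · intro x y hxy
    obtain ⟨f, ⟨g, hg, rfl⟩, hfxy⟩ := fourierSubalgebra_separatesPoints (T := (1 : ℝ)) hxy
    refine ⟨g, ⟨g, ?_, rfl⟩, hfxy⟩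
    refine ⟨BoundedContinuousFunction.mkOfCompact g, ?_, ?_⟩
    · change _ ∈ fourierSubalgebra (T := (1 : ℝ))
      exact hg
    · ext; rfl
  · intro g hg
    refine hmem g.toContinuousMap ?_
    rw [← fourierSubalgebra_coe]; exact hg


noncomputable def rudW (n : ℕ) (μ : Measure UnitAddCircle) : ℕ → Measure UnitAddCircle
  | 0 => μ
  | N + 1 => rudL n (rudW n μ N)

instance rudW_fin (n : ℕ) (μ : Measure UnitAddCircle) [IsFiniteMeasure μ] (N : ℕ) :
    IsFiniteMeasure (rudW n μ N) := by
  induction N with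
  | zero => exact ‹_›
  | succ N ih => exact rudL_fin n _

noncomputable def rudG (n : ℕ) (μ : Measure UnitAddCircle) (x : UnitAddCircle) : ℝ≥0∞ :=
  min (μ.rnDeriv (rudL n μ) x) 1

theorem rudG_meas (n : ℕ) (μ : Measure UnitAddCircle) : Measurable (rudG n μ) :=
  (Measure.measurable_rnDeriv _ _).min measurable_const

theorem rudG_le (n : ℕ) (μ : Measure UnitAddCircle) (x : UnitAddCircle) : rudG n μ x ≤ 1 :=
  min_le_right _ _

theorem rudG_density (n : ℕ) (hn : n ≠ 0) (μ : Measure UnitAddCircle) [IsFiniteMeasure μ]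
    (hinv : Measure.map (fun x : UnitAddCircle => n • x) μ = μ) :
    (rudL n μ).withDensity (rudG n μ) = μ := by
  have hle := rudL_le n hn μ hinv
  have : μ.HaveLebesgueDecomposition (rudL n μ) :=
    Measure.haveLebesgueDecomposition_of_sigmaFinite _ _
  conv_rhs => rw [← Measure.withDensity_rnDeriv_eq μ (rudL n μ) (Measure.absolutelyContinuous_of_le hle)]
  apply withDensity_congr_ae
  filter_upwards [Measure.rnDeriv_le_one_of_le hle] with x hx
  exact min_eq_left hx

noncomputable def rudPhi (n : ℕ) (μ : Measure UnitAddCircle) : ℕ → UnitAddCircle → ℝ≥0∞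
  | 0 => fun _ => 1
  | N + 1 => fun x => rudG n μ x * rudPhi n μ N (n • x)

theorem rudPhi_meas (n : ℕ) (μ : Measure UnitAddCircle) (N : ℕ) : Measurable (rudPhi n μ N) := by
  induction N with
  | zero => exact measurable_const
  | succ N ih => exact (rudG_meas n μ).mul (ih.comp (rud_smul_meas n))

theorem rudPhi_density (n : ℕ) (hn : n ≠ 0) (μ : Measure UnitAddCircle) [IsFiniteMeasure μ]
    (hinv : Measure.map (fun x : UnitAddCircle => n • x) μ = μ) (N : ℕ) :
    (rudW n μ N).withDensity (rudPhi n μ N) = μ := by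
  induction N with
  | zero => simp [rudW, rudPhi]
  | succ N ih =>
    have h1 := rudL_withDensity n hn (rudW n μ N) (rudPhi_meas n μ N)
    rw [ih] at h1
    conv_rhs => rw [← rudG_density n hn μ hinv, h1]
    have h2 : Measurable (fun x : UnitAddCircle => rudPhi n μ N (n • x)) :=
      (rudPhi_meas n μ N).comp (rud_smul_meas n)
    rw [← withDensity_mul _ h2 (rudG_meas n μ)]
    simp only [rudW, rudPhi]
    congr 1
    ext x
    simp [mul_comm]

theorem rudPhi_anti (n : ℕ) (μ : Measure UnitAddCircle) (x : UnitAddCircle) :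
    Antitone (fun N => rudPhi n μ N x) := by
  apply antitone_nat_of_succ_le
  intro N
  induction N generalizing x with
  | zero => simpa [rudPhi] using rudG_le n μ x
  | succ N ih =>
    change rudG n μ x * rudPhi n μ (N + 1) (n • x) ≤ rudG n μ x * rudPhi n μ N (n • x)
    gcongr
    exact ih _

noncomputable def rudInf (n : ℕ) (μ : Measure UnitAddCircle) (x : UnitAddCircle) : ℝ≥0∞ :=
  ⨅ N, rudPhi n μ N x

theorem rudInf_meas (n : ℕ) (μ : Measure UnitAddCircle) : Measurable (rudInf n μ) :=
  Measurable.iInf fun N => rudPhi_meas n μ N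

theorem rudInf_le_one (n : ℕ) (μ : Measure UnitAddCircle) (x : UnitAddCircle) : rudInf n μ x ≤ 1 :=
  (iInf_le _ 0).trans (by simp [rudPhi])

theorem rudInf_eq (n : ℕ) (μ : Measure UnitAddCircle) (x : UnitAddCircle) :
    rudInf n μ x = rudG n μ x * rudInf n μ (n • x) := by
  unfold rudInf
  rw [ENNReal.mul_iInf]
  · exact ((rudPhi_anti n μ x).iInf_nat_add 1).symm
  · exact fun h => absurd h (ne_top_of_le_ne_top ENNReal.one_ne_top (rudG_le n μ x))

theorem rudInf_le (n : ℕ) (μ : Measure UnitAddCircle) (x : UnitAddCircle) :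
    rudInf n μ x ≤ rudInf n μ (n • x) := by
  rw [rudInf_eq]
  exact (mul_le_mul_left (rudG_le n μ x) _).trans (by rw [one_mul])

theorem rudL_map (m n : ℕ) (hn : n ≠ 0) (hmn : Nat.Coprime m n) (ν : Measure UnitAddCircle)
    [IsFiniteMeasure ν] (hinv : Measure.map (fun x : UnitAddCircle => m • x) ν = ν) :
    Measure.map (fun x : UnitAddCircle => m • x) (rudL n ν) = rudL n ν := by
  have hmap : ∀ (ρ : Measure UnitAddCircle) (l : ℤ),
      ∫ x, (fourier l x : ℂ) ∂(Measure.map (fun x : UnitAddCircle => m • x) ρ) =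
      ∫ x, (fourier (m * l) x : ℂ) ∂ρ := by
    intro ρ l
    rw [integral_map (rud_smul_meas m).aemeasurable (fourier l).continuous.aestronglyMeasurable]
    simp only [rud_fourier_nsmul]
  apply rud_ext
  intro l
  rw [hmap]
  by_cases hl : (n : ℤ) ∣ l
  · obtain ⟨t, rfl⟩ := hl
    rw [rudL_fourier_dvd n hn, mul_left_comm, rudL_fourier_dvd n hn, ← hmap, hinv]
  · rw [rudL_fourier_ndvd n hn _ _ hl, rudL_fourier_ndvd n hn]
    intro h
    apply hl
    exact (Nat.isCoprime_iff_coprime.mpr hmn.symm).dvd_of_dvd_mul_left h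

theorem rudW_map (m n : ℕ) (hn : n ≠ 0) (hmn : Nat.Coprime m n) (μ : Measure UnitAddCircle)
    [IsFiniteMeasure μ] (hinv : Measure.map (fun x : UnitAddCircle => m • x) μ = μ) (N : ℕ) :
    Measure.map (fun x : UnitAddCircle => m • x) (rudW n μ N) = rudW n μ N := by
  induction N with
  | zero => exact hinv
  | succ N ih => exact rudL_map m n hn hmn _ ih

theorem rudW_fourier (n : ℕ) (hn : n ≠ 0) (μ : Measure UnitAddCircle)
    [IsProbabilityMeasure μ] (N : ℕ) (l : ℤ) :
    ‖∫ x, (fourier l x : ℂ) ∂(rudW n μ N)‖ ≤ if ((n ^ N : ℕ) : ℤ) ∣ l then (n : ℝ) ^ N else 0 := by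
  induction N generalizing l with
  | zero =>
    simp only [rudW, pow_zero, Nat.cast_one, one_dvd, if_true]
    refine (norm_integral_le_of_norm_le_const (C := 1) ?_).trans (by simp)
    filter_upwards with x
    exact (Circle.norm_coe _).le
  | succ N ih =>
    simp only [rudW]
    by_cases hl : (n : ℤ) ∣ l
    · obtain ⟨t, rfl⟩ := hl
      rw [rudL_fourier_dvd n hn, norm_mul]
      have h1 : (((n ^ (N + 1) : ℕ) : ℤ) ∣ n * t) ↔ ((n ^ N : ℕ) : ℤ) ∣ t := by
        push_cast
        rw [pow_succ', mul_dvd_mul_iff_left (by exact_mod_cast hn)]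
      simp only [h1]
      have := ih t
      rw [Complex.norm_natCast]
      calc (n : ℝ) * _ ≤ n * _ := mul_le_mul_of_nonneg_left this (by positivity)
        _ = _ := by split_ifs <;> ring
    · rw [rudL_fourier_ndvd n hn _ _ hl, norm_zero]
      split_ifs <;> positivity

theorem rudInv_m (m n : ℕ) (hn : n ≠ 0) (hmn : Nat.Coprime m n) (μ : Measure UnitAddCircle)
    [IsProbabilityMeasure μ] (hinvn : Measure.map (fun x : UnitAddCircle => n • x) μ = μ)
    (hinv : Measure.map (fun x : UnitAddCircle => m • x) μ = μ) :
    ∀ᵐ x ∂μ, rudInf n μ (m • x) ≠ 0 → rudInf n μ x ≠ 0 := by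
  have key : ∀ K : ℕ, μ {x | ((K : ℝ≥0∞) + 1)⁻¹ ≤ rudInf n μ (m • x) ∧ rudInf n μ x = 0} = 0 := by
    intro K
    set B : Set UnitAddCircle := {x | ((K : ℝ≥0∞) + 1)⁻¹ ≤ rudInf n μ x} with hBdef
    have hB : MeasurableSet B := measurableSet_le measurable_const (rudInf_meas n μ)
    set B' : Set UnitAddCircle := (fun x : UnitAddCircle => m • x) ⁻¹' B with hB'def
    have hB' : MeasurableSet B' := rud_smul_meas m hB
    have hK0 : (K : ℝ≥0∞) + 1 ≠ 0 := by simp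
    have hKt : (K : ℝ≥0∞) + 1 ≠ ∞ := by simp
    have hW : ∀ N, rudW n μ N B' ≤ K + 1 := by
      intro N
      have h1 : rudW n μ N B' = rudW n μ N B := by
        conv_rhs => rw [← rudW_map m n hn hmn μ hinv N]
        rw [Measure.map_apply (rud_smul_meas m) hB]
      rw [h1]
      have h2 : ((K : ℝ≥0∞) + 1)⁻¹ * rudW n μ N B ≤ 1 := by
        calc ((K : ℝ≥0∞) + 1)⁻¹ * rudW n μ N B = ∫⁻ x in B, ((K : ℝ≥0∞) + 1)⁻¹ ∂(rudW n μ N) := by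
              rw [setLIntegral_const]
          _ ≤ ∫⁻ x in B, rudPhi n μ N x ∂(rudW n μ N) := by
              apply setLIntegral_mono (rudPhi_meas n μ N)
              intro x hx
              exact le_trans hx (iInf_le _ N)
          _ = μ B := by
              rw [← withDensity_apply _ hB, rudPhi_density n hn μ hinvn]
          _ ≤ 1 := prob_le_one
      calc rudW n μ N B = (K + 1) * (((K : ℝ≥0∞) + 1)⁻¹ * rudW n μ N B) := by
            rw [← mul_assoc, ENNReal.mul_inv_cancel hK0 hKt, one_mul]
        _ ≤ (K + 1) * 1 := by gcongr
        _ = _ := mul_one _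
    have hR : ∀ ε : ℝ≥0∞, 0 < ε → μ {x | x ∈ B' ∧ rudInf n μ x = 0} ≤ ε * (K + 1) := by
      intro ε hε
      have hsub : {x | x ∈ B' ∧ rudInf n μ x = 0} ⊆ ⋃ N, (B' ∩ {x | rudPhi n μ N x ≤ ε}) := by
        rintro x ⟨hx, hx0⟩
        have : ⨅ N, rudPhi n μ N x < ε := by
          change rudInf n μ x < ε
          rwa [hx0]
        obtain ⟨N, hN⟩ := iInf_lt_iff.mp this
        exact Set.mem_iUnion.mpr ⟨N, hx, hN.le⟩
      refine (measure_mono hsub).trans ?_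
      rw [Monotone.measure_iUnion]
      · apply iSup_le
        intro N
        have hm1 : MeasurableSet (B' ∩ {x | rudPhi n μ N x ≤ ε}) :=
          hB'.inter (measurableSet_le (rudPhi_meas n μ N) measurable_const)
        calc μ (B' ∩ {x | rudPhi n μ N x ≤ ε})
            = ∫⁻ x in (B' ∩ {x | rudPhi n μ N x ≤ ε}), rudPhi n μ N x ∂(rudW n μ N) := by
              rw [← withDensity_apply _ hm1, rudPhi_density n hn μ hinvn]
          _ ≤ ∫⁻ x in (B' ∩ {x | rudPhi n μ N x ≤ ε}), ε ∂(rudW n μ N) := by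
              apply setLIntegral_mono measurable_const
              intro x hx
              exact hx.2
          _ = ε * rudW n μ N (B' ∩ {x | rudPhi n μ N x ≤ ε}) := by rw [setLIntegral_const]
          _ ≤ ε * (K + 1) := by
              gcongr
              exact (measure_mono Set.inter_subset_left).trans (hW N)
      · intro N N' h
        apply Set.inter_subset_inter_right
        intro x hx
        exact (rudPhi_anti n μ x h).trans hx
    have hfin : μ {x | x ∈ B' ∧ rudInf n μ x = 0} = 0 := by
      by_contra hne
      have h1 := hR ((μ {x | x ∈ B' ∧ rudInf n μ x = 0}) / 2 / (K + 1))
        (ENNReal.div_pos (ENNReal.div_pos hne (by simp)).ne' hKt)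
      rw [ENNReal.div_mul_cancel hK0 hKt] at h1
      exact absurd h1 (not_le.mpr (ENNReal.half_lt_self hne (measure_ne_top _ _)))
    exact hfin
  have hall : ∀ᵐ x ∂μ, ∀ K : ℕ, ¬ (((K : ℝ≥0∞) + 1)⁻¹ ≤ rudInf n μ (m • x) ∧ rudInf n μ x = 0) := by
    rw [ae_all_iff]
    intro K
    rw [ae_iff]
    simpa using key K
  filter_upwards [hall] with x hx hne h0
  obtain ⟨K, hK⟩ := ENNReal.exists_inv_nat_lt hne
  refine hx K ⟨le_trans ?_ hK.le, h0⟩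
  exact ENNReal.inv_le_inv.mpr (by simp)


theorem rud_vol_fourier (l : ℤ) (hl : l ≠ 0) :
    ∫ x : UnitAddCircle, (fourier l x : ℂ) = 0 := by
  apply integral_eq_zero_of_add_right_eq_neg (g := (((1 : ℝ) / 2 / l : ℝ) : UnitAddCircle))
  intro x
  exact fourier_add_half_inv_index hl (by norm_num) x

theorem rud_S_norm (l : ℤ) (b L : ℕ) (x : UnitAddCircle) :
    (((‖∑ i ∈ Finset.range L, (fourier (l * (b : ℤ) ^ i) x : ℂ)‖ ^ 2 : ℝ)) : ℂ) =
      ∑ i ∈ Finset.range L, ∑ j ∈ Finset.range L,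
        (fourier (l * ((b : ℤ) ^ i - (b : ℤ) ^ j)) x : ℂ) := by
  rw [Complex.ofReal_pow, ← Complex.mul_conj', map_sum, Finset.sum_mul_sum]
  refine Finset.sum_congr rfl fun i _ => Finset.sum_congr rfl fun j _ => ?_
  rw [mul_sub, sub_eq_add_neg, fourier_add, fourier_neg]

theorem rud_S_int (n : ℕ) (hn : n ≠ 0) (μ : Measure UnitAddCircle) [IsProbabilityMeasure μ]
    (b : ℕ) (hb : 1 < b) (hcop : Nat.Coprime b n)
    (h1 : (n : ℤ) ∣ (b : ℤ) - 1) (h2 : 2 ∣ n → (4 : ℤ) ∣ (b : ℤ) - 1) (l : ℤ) (hl : l ≠ 0) (N : ℕ) :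
    ∫ x, ‖∑ i ∈ Finset.range (n ^ N), (fourier (l * (b : ℤ) ^ i) x : ℂ)‖ ^ 2 ∂(rudW n μ N) ≤
      ((n : ℝ) ^ N) ^ 2 * (2 * (l * ((b : ℤ) - 1)).natAbs : ℕ) := by
  set D := l * ((b : ℤ) - 1) with hD
  have hD0 : D ≠ 0 := mul_ne_zero hl (by omega)
  have hL : 0 < n ^ N := by positivity
  have e1 : ((∫ x, ‖∑ i ∈ Finset.range (n ^ N), (fourier (l * (b : ℤ) ^ i) x : ℂ)‖ ^ 2
      ∂(rudW n μ N) : ℝ) : ℂ) = ∑ i ∈ Finset.range (n ^ N), ∑ j ∈ Finset.range (n ^ N),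
        ∫ x, (fourier (l * ((b : ℤ) ^ i - (b : ℤ) ^ j)) x : ℂ) ∂(rudW n μ N) := by
    rw [← integral_complex_ofReal]
    simp only [rud_S_norm]
    rw [integral_finsetSum _ (fun i _ => integrable_finsetSum _ fun j _ => rud_fourier_int _ _)]
    refine Finset.sum_congr rfl fun i _ => ?_
    rw [integral_finsetSum _ (fun j _ => rud_fourier_int _ _)]
  have e2 : ∫ x, ‖∑ i ∈ Finset.range (n ^ N), (fourier (l * (b : ℤ) ^ i) x : ℂ)‖ ^ 2
      ∂(rudW n μ N) ≤ ∑ j ∈ Finset.range (n ^ N), ∑ i ∈ Finset.range (n ^ N),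
        (if ((n ^ N : ℕ) : ℤ) ∣ D * ((i : ℤ) - j) then (n : ℝ) ^ N else 0) := by
    refine (le_abs_self _).trans ?_
    rw [← Real.norm_eq_abs, ← Complex.norm_real, e1, Finset.sum_comm]
    refine (norm_sum_le _ _).trans (Finset.sum_le_sum fun j _ => ?_)
    refine (norm_sum_le _ _).trans (Finset.sum_le_sum fun i _ => ?_)
    refine (rudW_fourier n hn μ N _).trans ?_
    by_cases h : ((n ^ N : ℕ) : ℤ) ∣ l * ((b : ℤ) ^ i - (b : ℤ) ^ j)
    · rw [if_pos h, if_pos (rud_nt2 n N b hcop h1 h2 l i j h)]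
    · rw [if_neg h]; split_ifs <;> positivity
  refine e2.trans ?_
  calc _ ≤ ∑ j ∈ Finset.range (n ^ N), ((2 * D.natAbs : ℕ) : ℝ) * (n : ℝ) ^ N := by
        refine Finset.sum_le_sum fun j hj => ?_
        rw [← Finset.sum_filter, Finset.sum_const, nsmul_eq_mul]
        have := rud_count (n ^ N) hL D hD0 j (Finset.mem_range.mp hj)
        gcongr
    _ = _ := by
        rw [Finset.sum_const, Finset.card_range, nsmul_eq_mul]
        push_cast; ring

theorem rud_fourier_inv (m : ℕ) (μ : Measure UnitAddCircle)
    (hinvm : Measure.map (fun x : UnitAddCircle => m • x) μ = μ) (l : ℤ) (k : ℕ) :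
    ∫ x, (fourier (l * (m : ℤ) ^ k) x : ℂ) ∂μ = ∫ x, (fourier l x : ℂ) ∂μ := by
  induction k with
  | zero => simp only [pow_zero, mul_one]
  | succ k ih =>
    rw [← ih]
    conv_rhs => rw [← hinvm]
    rw [integral_map (rud_smul_meas m).aemeasurable (fourier _).continuous.aestronglyMeasurable]
    simp only [rud_fourier_nsmul]
    congr 1
    ext x
    congr 2
    ring

theorem rud_host_bound (m n : ℕ) (hm : 2 ≤ m) (hn : 2 ≤ n) (hmn : Nat.Coprime m n)
    (μ : Measure UnitAddCircle) [IsProbabilityMeasure μ]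
    (hinvn : Measure.map (fun x : UnitAddCircle => n • x) μ = μ)
    (hinvm : Measure.map (fun x : UnitAddCircle => m • x) μ = μ) (l : ℤ) (hl : l ≠ 0) :
    ∃ C : ℝ, 0 ≤ C ∧ ∀ δ ε : ℝ, 0 < δ → 0 < ε → ∀ N : ℕ,
      ‖∫ x, (fourier l x : ℂ) ∂μ‖ₑ ≤ ENNReal.ofReal δ + μ {x | ENNReal.ofReal ε < rudPhi n μ N x} +
        ENNReal.ofReal (δ⁻¹ * (ε * C)) := by
  have hn0 : n ≠ 0 := by omega
  set a := Nat.totient (n ^ 2) with ha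
  have ha0 : 0 < a := Nat.totient_pos.mpr (by positivity)
  set b := m ^ a with hb
  have hb1 : 1 < b := Nat.one_lt_pow ha0.ne' (by omega)
  have hcop : Nat.Coprime b n := Nat.Coprime.pow_left _ hmn
  have hdiv : ((n ^ 2 : ℕ) : ℤ) ∣ (b : ℤ) - 1 := by
    have h := Nat.ModEq.pow_totient (x := m) (n := n ^ 2) (Nat.Coprime.pow_right _ hmn)
    have := (Nat.modEq_iff_dvd.mp h.symm)
    rw [hb]
    simpa using this
  have h1 : (n : ℤ) ∣ (b : ℤ) - 1 := by
    refine dvd_trans ?_ hdiv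
    push_cast
    exact dvd_pow_self _ two_ne_zero
  have h2 : 2 ∣ n → (4 : ℤ) ∣ (b : ℤ) - 1 := by
    rintro h
    refine dvd_trans ?_ hdiv
    have : 2 ^ 2 ∣ n ^ 2 := pow_dvd_pow_of_dvd h 2
    exact_mod_cast this
  refine ⟨((2 * (l * ((b : ℤ) - 1)).natAbs : ℕ) : ℝ), by positivity, ?_⟩
  set C : ℝ := ((2 * (l * ((b : ℤ) - 1)).natAbs : ℕ) : ℝ) with hC
  intro δ ε hδ hε N
  have hLpos : (0 : ℝ) < (n : ℝ) ^ N := by positivity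
  set S : UnitAddCircle → ℂ := fun x => ∑ i ∈ Finset.range (n ^ N), (fourier (l * (b : ℤ) ^ i) x : ℂ)
    with hS
  have hScont : Continuous S := by
    apply continuous_finsetSum
    intro i _
    exact (fourier _).continuous
  have hSle : ∀ x, ‖S x‖ ≤ (n : ℝ) ^ N := by
    intro x
    refine (norm_sum_le _ _).trans ?_
    refine (Finset.sum_le_sum (g := fun _ => (1 : ℝ)) fun i _ => (Circle.norm_coe _).le).trans ?_
    simp
  have hSint : ∫ x, S x ∂μ = (n : ℂ) ^ N * ∫ x, (fourier l x : ℂ) ∂μ := by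
    rw [hS, integral_finsetSum _ (fun i _ => rud_fourier_int _ _)]
    have : ∀ i ∈ Finset.range (n ^ N), ∫ x, (fourier (l * (b : ℤ) ^ i) x : ℂ) ∂μ =
        ∫ x, (fourier l x : ℂ) ∂μ := by
      intro i _
      have := rud_fourier_inv m μ hinvm l (a * i)
      rw [← this]
      congr 1
      ext x
      congr 2
      rw [hb]; push_cast; rw [pow_mul]
    rw [Finset.sum_congr rfl this]
    simp
  set s : UnitAddCircle → ℝ := fun x => ‖S x‖ / (n : ℝ) ^ N with hs
  have hsmeas : Measurable s := (hScont.norm.div_const _).measurable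
  have hs0 : ∀ x, 0 ≤ s x := fun x => by positivity
  have hs1 : ∀ x, s x ≤ 1 := fun x => by
    rw [hs]; simp only; rw [div_le_one hLpos]; exact hSle x
  have hbound : ‖∫ x, (fourier l x : ℂ) ∂μ‖ₑ ≤ ∫⁻ x, ENNReal.ofReal (s x) ∂μ := by
    have e : ∫ x, (fourier l x : ℂ) ∂μ = ∫ x, S x / (n : ℂ) ^ N ∂μ := by
      rw [integral_div, hSint, mul_div_cancel_left₀]
      have : (n : ℂ) ≠ 0 := by exact_mod_cast hn0
      positivity
    rw [e]
    refine (enorm_integral_le_lintegral_enorm _).trans (le_of_eq ?_)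
    congr 1
    ext x
    rw [← ofReal_norm, norm_div, norm_pow, Complex.norm_natCast]
  have hsq : ∫⁻ x, ENNReal.ofReal (s x ^ 2) ∂(rudW n μ N) ≤ ENNReal.ofReal C := by
    rw [← ofReal_integral_eq_lintegral_ofReal]
    · apply ENNReal.ofReal_le_ofReal
      have := rud_S_int n hn0 μ b hb1 hcop h1 h2 l hl N
      simp only [hs, div_pow]
      rw [integral_div, div_le_iff₀ (by positivity), mul_comm]
      exact this
    · refine (integrable_const (1 : ℝ)).mono' (hsmeas.pow_const 2).aestronglyMeasurable ?_
      filter_upwards with x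
      rw [Real.norm_eq_abs, abs_of_nonneg (by positivity)]
      exact pow_le_one₀ (hs0 x) (hs1 x)
    · filter_upwards with x
      positivity
  set Bad : Set UnitAddCircle := {x | ENNReal.ofReal ε < rudPhi n μ N x} with hBad
  have hBm : MeasurableSet Bad := measurableSet_lt measurable_const (rudPhi_meas n μ N)
  have hpt : ∀ x, ENNReal.ofReal (s x) ≤ ENNReal.ofReal δ + Bad.indicator 1 x +
      Badᶜ.indicator (fun x => ENNReal.ofReal (δ⁻¹ * s x ^ 2)) x := by
    intro x
    by_cases hx : x ∈ Bad
    · simp only [hx, Set.indicator_of_mem, Pi.one_apply]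
      calc ENNReal.ofReal (s x) ≤ 1 := ENNReal.ofReal_le_one.mpr (hs1 x)
        _ ≤ _ := by rw [add_right_comm]; exact le_add_self
    · have hx' : x ∈ Badᶜ := hx
      simp only [hx, hx', Set.indicator_of_mem, Set.indicator_of_notMem, not_false_eq_true, add_zero]
      rw [← ENNReal.ofReal_add hδ.le (mul_nonneg (by positivity) (sq_nonneg _))]
      apply ENNReal.ofReal_le_ofReal
      have : δ⁻¹ * s x ^ 2 = s x ^ 2 / δ := by ring
      rw [this, ← sub_le_iff_le_add', le_div_iff₀ hδ]
      nlinarith [sq_nonneg (s x - δ), hs0 x]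
  have hmeas2 : Measurable (fun x => ENNReal.ofReal (δ⁻¹ * s x ^ 2)) :=
    ((hsmeas.pow_const 2).const_mul _).ennreal_ofReal
  calc _ ≤ _ := hbound
    _ ≤ ∫⁻ x, (ENNReal.ofReal δ + Bad.indicator 1 x +
      Badᶜ.indicator (fun x => ENNReal.ofReal (δ⁻¹ * s x ^ 2)) x) ∂μ := lintegral_mono hpt
    _ = ENNReal.ofReal δ + μ Bad + ∫⁻ x, Badᶜ.indicator (fun x => ENNReal.ofReal (δ⁻¹ * s x ^ 2)) x ∂μ := by
      rw [lintegral_add_right _ (hmeas2.indicator hBm.compl), lintegral_add_left measurable_const,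
        lintegral_indicator_one hBm]
      simp
    _ ≤ _ := by
      gcongr
      conv_lhs => rw [← rudPhi_density n hn0 μ hinvn N]
      rw [lintegral_withDensity_eq_lintegral_mul _ (rudPhi_meas n μ N) (hmeas2.indicator hBm.compl)]
      calc _ ≤ ∫⁻ x, ENNReal.ofReal (δ⁻¹ * ε) * ENNReal.ofReal (s x ^ 2) ∂(rudW n μ N) := by
            apply lintegral_mono
            intro x
            simp only [Pi.mul_apply]
            by_cases hx : x ∈ Bad
            · simp [hx]
            · have hx' : x ∈ Badᶜ := hx
              have hxx : rudPhi n μ N x ≤ ENNReal.ofReal ε := not_lt.mp hx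
              simp only [hx', Set.indicator_of_mem]
              rw [← ENNReal.ofReal_mul (by positivity)]
              calc _ ≤ ENNReal.ofReal ε * ENNReal.ofReal (δ⁻¹ * s x ^ 2) := by gcongr
                _ = _ := by rw [← ENNReal.ofReal_mul hε.le]; congr 1; ring
        _ ≤ _ := by
            rw [lintegral_const_mul _ (hsmeas.pow_const 2).ennreal_ofReal]
            rw [← mul_assoc, ENNReal.ofReal_mul (by positivity) (q := C)]
            gcongr

theorem rud_host (m n : ℕ) (hm : 2 ≤ m) (hn : 2 ≤ n) (hmn : Nat.Coprime m n)
    (μ : Measure UnitAddCircle) [IsProbabilityMeasure μ]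
    (hinvn : Measure.map (fun x : UnitAddCircle => n • x) μ = μ)
    (hinvm : Measure.map (fun x : UnitAddCircle => m • x) μ = μ)
    (h0 : ∀ᵐ x ∂μ, rudInf n μ x = 0) : μ = volume := by
  apply rud_ext
  intro l
  by_cases hl : l = 0
  · subst hl
    simp only [fourier_zero]
    simp [Measure.real]
  rw [rud_vol_fourier l hl]
  obtain ⟨C, hC, hb⟩ := rud_host_bound m n hm hn hmn μ hinvn hinvm l hl
  have hlim : ∀ ε : ℝ, 0 < ε → Filter.Tendsto (fun N => μ {x | ENNReal.ofReal ε < rudPhi n μ N x})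
      Filter.atTop (nhds 0) := by
    intro ε hε
    have h1 := tendsto_measure_iInter_atTop (μ := μ)
      (s := fun N => {x | ENNReal.ofReal ε < rudPhi n μ N x})
      (fun N => (measurableSet_lt measurable_const (rudPhi_meas n μ N)).nullMeasurableSet)
      (fun N N' h x hx => lt_of_lt_of_le hx (rudPhi_anti n μ x h)) ⟨0, measure_ne_top _ _⟩
    have h2 : μ (⋂ N, {x | ENNReal.ofReal ε < rudPhi n μ N x}) = 0 := by
      refine measure_mono_null ?_ (ae_iff.mp h0)
      intro x hx
      have : ENNReal.ofReal ε ≤ rudInf n μ x := le_iInf fun N => (Set.mem_iInter.mp hx N).le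
      exact ((ENNReal.ofReal_pos.mpr hε).trans_le this).ne'
    rwa [h2] at h1
  have hreal : ∀ δ ε : ℝ, 0 < δ → 0 < ε → ‖∫ x, (fourier l x : ℂ) ∂μ‖ ≤ δ + δ⁻¹ * (ε * C) := by
    intro δ ε hδ hε
    have h1 : Filter.Tendsto (fun N => ENNReal.ofReal δ + μ {x | ENNReal.ofReal ε < rudPhi n μ N x} +
        ENNReal.ofReal (δ⁻¹ * (ε * C))) Filter.atTop
        (nhds (ENNReal.ofReal δ + 0 + ENNReal.ofReal (δ⁻¹ * (ε * C)))) :=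
      (tendsto_const_nhds.add (hlim ε hε)).add tendsto_const_nhds
    have h2 := ge_of_tendsto' h1 (hb δ ε hδ hε)
    rw [add_zero, ← ENNReal.ofReal_add hδ.le (by positivity), ← ofReal_norm,
      ENNReal.ofReal_le_ofReal_iff (by positivity)] at h2
    exact h2
  by_contra hne
  set c := ‖∫ x, (fourier l x : ℂ) ∂μ‖ with hc
  have hcpos : 0 < c := norm_pos_iff.mpr hne
  have h1 := hreal (c / 4) (c ^ 2 / (16 * (C + 1))) (by positivity) (by positivity)
  have h2 : (c / 4)⁻¹ * (c ^ 2 / (16 * (C + 1)) * C) ≤ c / 4 := by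
    have : (c / 4)⁻¹ * (c ^ 2 / (16 * (C + 1)) * C) = c / 4 * (C / (C + 1)) := by
      field_simp
      ring
    rw [this]
    have : C / (C + 1) ≤ 1 := by rw [div_le_one (by positivity)]; linarith
    nlinarith
  linarith


section RudShannon

variable {α : Type*} [MeasurableSpace α]

noncomputable def rudH (μ : Measure α) {κ : Type*} [Fintype κ] (Z : α → κ) : ℝ :=
  ∑ k, Real.negMulLog (μ.real (Z ⁻¹' {k}))

theorem rud_sum_fib (μ : Measure α) [IsFiniteMeasure μ] {κ : Type*} [Fintype κ] (Z : α → κ)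
    (hZ : ∀ k, MeasurableSet (Z ⁻¹' {k})) (U : κ → Prop) [DecidablePred U] :
    μ.real {x | U (Z x)} = ∑ k, if U k then μ.real (Z ⁻¹' {k}) else 0 := by
  rw [← Finset.sum_filter, ← measureReal_biUnion_finset]
  · congr 1
    ext x
    simp
  · intro i _ j _ hij
    refine Set.disjoint_left.mpr fun x hx hx' => hij ?_
    rw [← (hx : Z x = i), ← (hx' : Z x = j)]
  · intro i _
    exact hZ i

theorem rud_negMulLog_sum {κ : Type*} (s : Finset κ) (p : κ → ℝ) (hp : ∀ k, 0 ≤ p k) :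
    Real.negMulLog (∑ k ∈ s, p k) ≤ ∑ k ∈ s, Real.negMulLog (p k) := by
  conv_lhs => rw [Real.negMulLog, neg_mul, Finset.sum_mul, ← Finset.sum_neg_distrib]
  refine Finset.sum_le_sum fun k hk => ?_
  rw [Real.negMulLog, neg_mul, neg_le_neg_iff]
  rcases (hp k).eq_or_lt with h | h
  · rw [← h]; simp
  · apply mul_le_mul_of_nonneg_left _ h.le
    exact Real.log_le_log h (Finset.single_le_sum (fun i _ => hp i) hk)

theorem rudH_mono (μ : Measure α) [IsFiniteMeasure μ] {κ κ' : Type*} [Fintype κ] [Fintype κ']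
    (Z : α → κ) (hZ : ∀ k, MeasurableSet (Z ⁻¹' {k})) (W : α → κ')
    (hWZ : ∀ x y, Z x = Z y → W x = W y) : rudH μ W ≤ rudH μ Z := by
  classical
  rcases isEmpty_or_nonempty α with h | h
  · have e1 : ∀ s : Set α, μ.real s = 0 := fun s => by rw [Set.eq_empty_of_isEmpty s]; simp
    simp [rudH, e1]
  obtain ⟨a0⟩ := h
  have : Nonempty κ' := ⟨W a0⟩
  obtain ⟨g, hg⟩ : ∃ g : κ → κ', W = g ∘ Z :=
    (Function.factorsThrough_iff W).mp (fun x y h => hWZ x y h)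
  unfold rudH
  have h1 : ∀ w, μ.real (W ⁻¹' {w}) = ∑ k with g k = w, μ.real (Z ⁻¹' {k}) := by
    intro w
    have := rud_sum_fib μ Z hZ (fun k => g k = w)
    rw [← Finset.sum_filter] at this
    rw [← this, hg]
    rfl
  calc ∑ w, Real.negMulLog (μ.real (W ⁻¹' {w}))
      ≤ ∑ w, ∑ k with g k = w, Real.negMulLog (μ.real (Z ⁻¹' {k})) := by
        refine Finset.sum_le_sum fun w _ => ?_
        rw [h1]
        exact rud_negMulLog_sum _ _ fun k => measureReal_nonneg
    _ = _ := Finset.sum_fiberwise _ _ _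

theorem rud_gibbs_one {S : Type*} [Fintype S] [DecidableEq S] (p : S → ℝ) (hp : ∀ s, 0 ≤ p s) (t : S)
    (δ : ℝ) (hδ : 0 < δ) (hδ1 : δ < 1) :
    ∑ s, Real.negMulLog (p s) ≤ Real.negMulLog (∑ s, p s) + (∑ s, p s) * (-Real.log (1 - δ)) +
      (∑ s, if s ≠ t then p s else 0) * (Real.log (Fintype.card S) - Real.log δ) := by
  have hc : (0 : ℝ) < Fintype.card S := by
    have : Nonempty S := ⟨t⟩
    exact_mod_cast Fintype.card_pos
  set P := ∑ s, p s with hP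
  have hP0 : 0 ≤ P := Finset.sum_nonneg fun s _ => hp s
  rcases hP0.eq_or_lt with h | hPpos
  · have h0 : ∀ s, p s = 0 := by
      intro s
      exact (Finset.sum_eq_zero_iff_of_nonneg (fun s _ => hp s)).mp h.symm s (Finset.mem_univ _)
    rw [← h]
    simp [h0]
  set q : S → ℝ := fun s => (if s = t then 1 - δ else 0) + δ / Fintype.card S with hq
  have hqpos : ∀ s, 0 < q s := by
    intro s
    have : 0 < δ / Fintype.card S := by positivity
    simp only [hq]
    split_ifs
    · linarith
    · linarith
  have hqsum : ∑ s, q s = 1 := by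
    simp only [hq, Finset.sum_add_distrib, Finset.sum_ite_eq', Finset.mem_univ, if_true,
      Finset.sum_const, Finset.card_univ, nsmul_eq_mul]
    field_simp
    ring
  have hterm : ∀ s, Real.negMulLog (p s) ≤ p s * (-Real.log P) + p s * (-Real.log (1 - δ)) +
      (if s ≠ t then p s else 0) * (Real.log (Fintype.card S) - Real.log δ) + (P * q s - p s) := by
    intro s
    have hlogq : -Real.log (q s) ≤ -Real.log (1 - δ) +
        (if s ≠ t then Real.log (Fintype.card S) - Real.log δ else 0) := by
      have h1 : Real.log (1 - δ) ≤ 0 := Real.log_nonpos (by linarith) (by linarith)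
      by_cases hs : s = t
      · simp only [hs, ne_eq, not_true_eq_false, if_false, add_zero, neg_le_neg_iff]
        apply Real.log_le_log (by linarith)
        simp only [hq, if_true]
        have : 0 < δ / Fintype.card S := by positivity
        linarith
      · simp only [hs, ne_eq, not_false_eq_true, if_true, hq, if_false, zero_add]
        rw [Real.log_div hδ.ne' hc.ne']
        linarith
    have h2 : Real.negMulLog (p s) ≤ p s * (-Real.log P) + p s * (-Real.log (q s)) + (P * q s - p s) := by
      rcases (hp s).eq_or_lt with h | h
      · rw [← h]; simp only [Real.negMulLog_zero, zero_mul, zero_add, sub_zero]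
        exact (mul_pos hPpos (hqpos s)).le
      · have h3 := Real.log_le_sub_one_of_pos (div_pos (mul_pos hPpos (hqpos s)) h)
        rw [Real.log_div (mul_pos hPpos (hqpos s)).ne' h.ne', Real.log_mul hPpos.ne' (hqpos s).ne'] at h3
        have h4 := mul_le_mul_of_nonneg_left h3 h.le
        have h5 : p s * (P * q s / p s - 1) = P * q s - p s := by field_simp
        rw [h5] at h4
        unfold Real.negMulLog
        linarith
    have h6 := mul_le_mul_of_nonneg_left hlogq (hp s)
    have h7 : p s * (-Real.log (1 - δ) + (if s ≠ t then Real.log (Fintype.card S) - Real.log δ else 0)) =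
      p s * (-Real.log (1 - δ)) + (if s ≠ t then p s else 0) * (Real.log (Fintype.card S) - Real.log δ) := by
      split_ifs <;> ring
    linarith
  refine (Finset.sum_le_sum fun s _ => hterm s).trans (le_of_eq ?_)
  simp only [Finset.sum_add_distrib, ← Finset.sum_mul, Finset.sum_sub_distrib, ← Finset.mul_sum, hqsum]
  rw [← hP]
  unfold Real.negMulLog
  ring

theorem rud_gibbs (μ : Measure α) [IsProbabilityMeasure μ] {S κ : Type*} [Fintype S] [DecidableEq S]
    [Fintype κ] [DecidableEq κ]
    (X : α → S) (hX : ∀ k, MeasurableSet (X ⁻¹' {k}))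
    (Z : α → κ) (hZ : ∀ k, MeasurableSet (Z ⁻¹' {k})) (f : κ → S)
    (δ : ℝ) (hδ : 0 < δ) (hδ1 : δ < 1) :
    rudH μ (fun x => (X x, Z x)) ≤ rudH μ Z + -Real.log (1 - δ) +
      μ.real {x | X x ≠ f (Z x)} * (Real.log (Fintype.card S) - Real.log δ) := by
  set W : α → S × κ := fun x => (X x, Z x) with hW
  have hWm : ∀ k, MeasurableSet (W ⁻¹' {k}) := by
    rintro ⟨s, z⟩
    have : W ⁻¹' {(s, z)} = X ⁻¹' {s} ∩ Z ⁻¹' {z} := by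
      ext x; simp [hW]
    rw [this]
    exact (hX s).inter (hZ z)
  have h1 : ∀ z, μ.real (Z ⁻¹' {z}) = ∑ s, μ.real (W ⁻¹' {(s, z)}) := by
    intro z
    have := rud_sum_fib μ W hWm (fun k => k.2 = z)
    have e : {x | (W x).2 = z} = Z ⁻¹' {z} := rfl
    rw [e] at this
    rw [this, Fintype.sum_prod_type]
    refine Finset.sum_congr rfl fun s _ => ?_
    simp
  have h2 : ∑ z, μ.real (Z ⁻¹' {z}) = 1 := by
    have := rud_sum_fib μ Z hZ (fun _ => True)
    simpa using this.symm
  have h3 : μ.real {x | X x ≠ f (Z x)} = ∑ z, ∑ s, if s ≠ f z then μ.real (W ⁻¹' {(s, z)}) else 0 := by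
    have := rud_sum_fib μ W hWm (fun k => k.1 ≠ f k.2)
    have e : {x | (W x).1 ≠ f (W x).2} = {x | X x ≠ f (Z x)} := rfl
    rw [e] at this
    rw [this, Fintype.sum_prod_type_right]
  calc rudH μ W = ∑ z, ∑ s, Real.negMulLog (μ.real (W ⁻¹' {(s, z)})) := by
        unfold rudH; rw [Fintype.sum_prod_type_right]
    _ ≤ ∑ z, (Real.negMulLog (μ.real (Z ⁻¹' {z})) + μ.real (Z ⁻¹' {z}) * (-Real.log (1 - δ)) +
      (∑ s, if s ≠ f z then μ.real (W ⁻¹' {(s, z)}) else 0) *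
        (Real.log (Fintype.card S) - Real.log δ)) := by
        refine Finset.sum_le_sum fun z _ => ?_
        rw [h1]
        exact rud_gibbs_one _ (fun s => measureReal_nonneg) (f z) δ hδ hδ1
    _ = _ := by
        rw [Finset.sum_add_distrib, Finset.sum_add_distrib, ← Finset.sum_mul, ← Finset.sum_mul, h2, ← h3]
        unfold rudH
        ring

end RudShannon


theorem rud_approx (n : ℕ) (hn : 2 ≤ n) (μ : Measure UnitAddCircle) [IsProbabilityMeasure μ]
    {S : Type} [Fintype S] [Nonempty S] (Y : UnitAddCircle → S)
    (hY : ∀ s, MeasurableSet (Y ⁻¹' {s})) (ε : ℝ≥0∞) (hε : ε ≠ 0) :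
    ∃ (K : ℕ) (F : ℕ → S), μ {x | Y x ≠ F (rudCell n K x)} ≤ ε := by
  classical
  have hc : (Fintype.card S : ℝ≥0∞) ≠ 0 := by simp
  have h1 : ∀ s, ∃ C : Set UnitAddCircle, C ⊆ Y ⁻¹' {s} ∧ IsCompact C ∧
      μ (Y ⁻¹' {s} \ C) < ε / Fintype.card S := by
    intro s
    apply MeasurableSet.exists_isCompact_sdiff_lt (hY s) (measure_ne_top _ _)
    exact (ENNReal.div_pos hε (by simp)).ne'
  choose C hC1 hC2 hC3 using h1
  have h2 : ∀ s t, s ≠ t → ∃ δ : ℝ, 0 < δ ∧ ∀ x ∈ C s, ∀ y ∈ C t, δ ≤ dist x y := by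
    intro s t hst
    have hd : Disjoint (C s) (C t) := by
      refine Set.disjoint_left.mpr fun x hx hx' => hst ?_
      rw [← (hC1 s hx : Y x = s), ← (hC1 t hx' : Y x = t)]
    obtain ⟨δ, hδ, h⟩ := hd.exists_thickenings (hC2 s) (hC2 t).isClosed
    refine ⟨δ, hδ, fun x hx y hy => ?_⟩
    by_contra! hlt
    refine Set.disjoint_left.mp h (Metric.self_subset_thickening hδ _ hx) ?_
    exact Metric.mem_thickening_iff.mpr ⟨y, hy, hlt⟩
  have h3 : ∀ᶠ K : ℕ in Filter.atTop, ∀ s t, s ≠ t → ∀ x ∈ C s, ∀ y ∈ C t, 1 / (n : ℝ) ^ K < dist x y := by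
    rw [Filter.eventually_all]; intro s
    rw [Filter.eventually_all]; intro t
    by_cases hst : s = t
    · simp [hst]
    obtain ⟨δ, hδ, h⟩ := h2 s t hst
    have hn1 : (1 : ℝ) < n := by exact_mod_cast hn
    have ht : Filter.Tendsto (fun K : ℕ => 1 / (n : ℝ) ^ K) Filter.atTop (nhds 0) := by
      simpa using tendsto_pow_atTop_nhds_zero_of_lt_one (r := (n : ℝ)⁻¹) (by positivity) (inv_lt_one_of_one_lt₀ hn1)
    filter_upwards [ht.eventually_lt_const hδ] with K hK _ x hx y hy
    exact hK.trans_le (h x hx y hy)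
  obtain ⟨K, hK⟩ := h3.exists
  let F : ℕ → S := fun k => if h : ∃ s, ∃ x ∈ C s, rudCell n K x = k then h.choose else Classical.arbitrary S
  refine ⟨K, F, ?_⟩
  have hF : ∀ s, ∀ x ∈ C s, F (rudCell n K x) = s := by
    intro s x hx
    have h : ∃ s, ∃ y ∈ C s, rudCell n K y = rudCell n K x := ⟨s, x, hx, rfl⟩
    have e : F (rudCell n K x) = h.choose := dif_pos h
    rw [e]
    obtain ⟨y, hy, hyx⟩ := h.choose_spec
    by_contra hne
    have := hK _ _ hne y hy x hx
    exact absurd (rudCell_dist n K (by omega) y x hyx) (not_le.mpr this)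
  have hsub : {x | Y x ≠ F (rudCell n K x)} ⊆ ⋃ s ∈ (Finset.univ : Finset S), (Y ⁻¹' {s} \ C s) := by
    intro x hx
    simp only [Set.mem_iUnion]
    refine ⟨Y x, Finset.mem_univ _, rfl, fun hxC => hx ?_⟩
    exact (hF _ x hxC).symm
  calc μ {x | Y x ≠ F (rudCell n K x)} ≤ _ := measure_mono hsub
    _ ≤ ∑ s : S, μ (Y ⁻¹' {s} \ C s) := measure_biUnion_finset_le _ _
    _ ≤ ∑ s : S, ε / Fintype.card S := Finset.sum_le_sum fun s _ => (hC3 s).le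
    _ = ε := by
      rw [Finset.sum_const, nsmul_eq_mul, Finset.card_univ]
      exact ENNReal.mul_div_cancel hc (by simp)

theorem rud_factor (n : ℕ) (hn : n ≠ 0) (μ : Measure UnitAddCircle) [IsProbabilityMeasure μ]
    (hinv : Measure.map (fun x : UnitAddCircle => n • x) μ = μ)
    (hg : ∀ᵐ x ∂μ, rudG n μ x = 1)
    {S : Type} (X : UnitAddCircle → S) (hX : ∀ s, MeasurableSet (X ⁻¹' {s})) :
    ∃ Y : UnitAddCircle → S, (∀ s, MeasurableSet (Y ⁻¹' {s})) ∧ ∀ᵐ x ∂μ, X x = Y (n • x) := by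
  classical
  set E : Set UnitAddCircle := {x | rudG n μ x = 1} with hE
  have hEm : MeasurableSet E := rudG_meas n μ (measurableSet_singleton 1)
  have hμE : μ E = 1 := by
    rw [prob_compl_eq_zero_iff hEm |>.symm]; exact hg
  have hLE : rudL n μ E = 1 := by
    rw [← hμE]
    conv_rhs => rw [← rudG_density n hn μ hinv]
    rw [withDensity_apply _ hEm, setLIntegral_congr_fun hEm (fun x hx => hx), setLIntegral_one]
  rw [rudL_apply n μ hEm] at hLE
  set c : UnitAddCircle → ℝ≥0∞ := fun y => ∑ k ∈ Finset.range n, (rudSec n k ⁻¹' E).indicator 1 y with hc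
  have hEk : ∀ k, MeasurableSet (rudSec n k ⁻¹' E) := fun k => rudSec_meas n k hEm
  have hcm : Measurable c := Finset.measurable_fun_sum _ fun k _ => measurable_one.indicator (hEk k)
  have hcint : ∫⁻ y, c y ∂μ = 1 := by
    rw [hc, lintegral_finsetSum _ fun k _ => measurable_one.indicator (hEk k), ← hLE]
    refine Finset.sum_congr rfl fun k _ => ?_
    rw [lintegral_indicator_one (hEk k)]
  have hT : MeasurePreserving (fun x : UnitAddCircle => n • x) μ μ := ⟨rud_smul_meas n, hinv⟩
  have hc1' : ∀ᵐ x ∂μ, 1 ≤ c (n • x) := by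
    filter_upwards [hg] with x hx
    have hk : rudCell n 1 x ∈ Finset.range n := by simpa using rudCell_lt n 1 hn x
    refine le_trans ?_ (Finset.single_le_sum (fun k _ => zero_le) hk)
    rw [Set.indicator_of_mem]
    · simp
    · change rudSec n _ (n • x) ∈ E
      rw [rudSec_cell n hn]; exact hx
  have hc1 : ∀ᵐ y ∂μ, 1 ≤ c y := by
    have hms : MeasurableSet {y | 1 ≤ c y} := measurableSet_le measurable_const hcm
    rw [← hinv]
    exact (ae_map_iff (rud_smul_meas n).aemeasurable hms).mpr hc1'
  have hceq : ∀ᵐ y ∂μ, c y = 1 := by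
    have := ae_eq_of_ae_le_of_lintegral_le (μ := μ) (f := fun _ => 1) (g := c) hc1 (by simp) hcm.aemeasurable (by rw [hcint]; simp)
    filter_upwards [this] with y hy using hy.symm
  have hceqT : ∀ᵐ x ∂μ, c (n • x) = 1 := hT.quasiMeasurePreserving.ae hceq
  -- the index
  let κ : UnitAddCircle → ℕ := fun y => ∑ k ∈ Finset.range n, (rudSec n k ⁻¹' E).indicator (fun _ => k) y
  have hκm : Measurable κ := Finset.measurable_fun_sum _ fun k _ => measurable_const.indicator (hEk k)
  refine ⟨fun y => X (rudSec n (κ y) y), fun s => ?_, ?_⟩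
  · have : (fun y => X (rudSec n (κ y) y)) ⁻¹' {s} = ⋃ k : ℕ, (κ ⁻¹' {k} ∩ rudSec n k ⁻¹' (X ⁻¹' {s})) := by
      ext y; simp
    rw [this]
    exact MeasurableSet.iUnion fun k => (hκm (measurableSet_singleton k)).inter (rudSec_meas n k (hX s))
  · filter_upwards [hg, hceqT] with x hx hcx
    have hk : rudCell n 1 x ∈ Finset.range n := by simpa using rudCell_lt n 1 hn x
    have hxE : n • x ∈ rudSec n (rudCell n 1 x) ⁻¹' E := by
      change rudSec n _ (n • x) ∈ E
      rw [rudSec_cell n hn]; exact hx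
    have hoth : ∀ k ∈ Finset.range n, k ≠ rudCell n 1 x → n • x ∉ rudSec n k ⁻¹' E := by
      intro k hkn hne hmem
      have h2 : ∑ j ∈ ({k, rudCell n 1 x} : Finset ℕ), (rudSec n j ⁻¹' E).indicator (1 : UnitAddCircle → ℝ≥0∞) (n • x) ≤ c (n • x) := by
        apply Finset.sum_le_sum_of_subset
        intro j hj
        simp only [Finset.mem_insert, Finset.mem_singleton] at hj
        rcases hj with rfl | rfl
        · exact hkn
        · exact hk
      rw [Finset.sum_pair hne, Set.indicator_of_mem hmem, Set.indicator_of_mem hxE, hcx] at h2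
      norm_num at h2
    have hκ : κ (n • x) = rudCell n 1 x := by
      change ∑ k ∈ Finset.range n, (rudSec n k ⁻¹' E).indicator (fun _ => k) (n • x) = _
      rw [Finset.sum_eq_single_of_mem _ hk, Set.indicator_of_mem hxE]
      intro k hkn hne
      exact Set.indicator_of_notMem (hoth k hkn hne) _
    simp only [hκ, rudSec_cell n hn]


theorem rud_ent_bound (n : ℕ) (hn : 2 ≤ n) (μ : Measure UnitAddCircle) [IsProbabilityMeasure μ]
    (hinv : Measure.map (fun x : UnitAddCircle => n • x) μ = μ)
    (hg : ∀ᵐ x ∂μ, rudG n μ x = 1)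
    {S : Type} [Fintype S] [Nonempty S] (p : UnitAddCircle → S) (hp : ∀ s, MeasurableSet (p ⁻¹' {s}))
    (η : ℝ) (hη : 0 < η) :
    ∃ C : ℝ, ∀ N : ℕ, rudH μ (fun x (i : Fin N) => p ((fun x : UnitAddCircle => n • x)^[(i : ℕ)] x)) ≤ C + N * η := by
  classical
  have hn0 : n ≠ 0 := by omega
  have : NeZero n := ⟨hn0⟩
  set T : UnitAddCircle → UnitAddCircle := fun x => n • x with hTdef
  have hT : MeasurePreserving T μ μ := ⟨rud_smul_meas n, hinv⟩
  let X : UnitAddCircle → S × Fin n := fun x => (p x, ⟨rudCell n 1 x, by simpa using rudCell_lt n 1 hn0 x⟩)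
  have hX : ∀ s, MeasurableSet (X ⁻¹' {s}) := by
    rintro ⟨s, k⟩
    have : X ⁻¹' {(s, k)} = p ⁻¹' {s} ∩ rudCell n 1 ⁻¹' {(k : ℕ)} := by
      ext x; simp [X, Fin.ext_iff]
    rw [this]
    exact (hp s).inter (rudCell_meas n 1 (measurableSet_singleton _))
  obtain ⟨Y, hYm, hXY⟩ := rud_factor n hn0 μ hinv hg X hX
  set δ : ℝ := 1 - Real.exp (-(η / 2)) with hδdef
  have hδ : 0 < δ := by
    have : Real.exp (-(η / 2)) < 1 := Real.exp_lt_one_iff.mpr (by linarith)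
    linarith
  have hδ1 : δ < 1 := by
    have := Real.exp_pos (-(η / 2)); linarith
  have hlog : -Real.log (1 - δ) = η / 2 := by
    rw [hδdef, _root_.sub_sub_cancel, Real.log_exp, neg_neg]
  set L : ℝ := Real.log (Fintype.card (S × Fin n)) - Real.log δ with hL
  have hL0 : 0 ≤ L := by
    have h1 : 0 ≤ Real.log (Fintype.card (S × Fin n)) := Real.log_natCast_nonneg _
    have h2 : Real.log δ ≤ 0 := Real.log_nonpos hδ.le hδ1.le
    linarith
  set e : ℝ := η / (2 * (L + 1)) with he
  have he0 : 0 < e := by positivity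
  obtain ⟨K, F, hKF⟩ := rud_approx n hn μ Y hYm (ENNReal.ofReal e) (by simpa using he0)
  let Z : (N : ℕ) → UnitAddCircle → (Fin N → S) × Fin (n ^ (N + K)) := fun N x =>
    (fun i => p (T^[(i : ℕ)] x), ⟨rudCell n (N + K) x, rudCell_lt n _ hn0 x⟩)
  have hTi : ∀ i : ℕ, Measurable (T^[i]) := fun i => (rud_smul_meas n).iterate i
  have hZ : ∀ N k, MeasurableSet (Z N ⁻¹' {k}) := by
    rintro N ⟨s, k⟩
    have : Z N ⁻¹' {(s, k)} = (⋂ i : Fin N, T^[(i : ℕ)] ⁻¹' (p ⁻¹' {s i})) ∩ rudCell n (N + K) ⁻¹' {(k : ℕ)} := by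
      ext x; simp [Z, Fin.ext_iff, funext_iff]
    rw [this]
    exact (MeasurableSet.iInter fun i : Fin N => hTi i (hp (s i))).inter (rudCell_meas n _ (measurableSet_singleton _))
  have hZT : ∀ N k, MeasurableSet ((fun x => Z N (T x)) ⁻¹' {k}) := fun N k =>
    rud_smul_meas n (hZ N k)
  have hHT : ∀ N, rudH μ (fun x => Z N (T x)) = rudH μ (Z N) := by
    intro N
    unfold rudH
    refine Finset.sum_congr rfl fun k _ => ?_
    congr 1
    have : (fun x => Z N (T x)) ⁻¹' {k} = T ⁻¹' (Z N ⁻¹' {k}) := rfl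
    rw [this, measureReal_def, hT.measure_preimage (hZ N k).nullMeasurableSet, measureReal_def]
  have hbad : ∀ N, μ.real {x | X x ≠ F (rudCell n (N + K) (T x) / n ^ N)} ≤ e := by
    intro N
    have h1 : μ {x | X x ≠ F (rudCell n (N + K) (T x) / n ^ N)} ≤ ENNReal.ofReal e := by
      calc μ {x | X x ≠ F (rudCell n (N + K) (T x) / n ^ N)}
          ≤ μ (T ⁻¹' {y | Y y ≠ F (rudCell n K y)}) := by
            apply measure_mono_ae
            filter_upwards [hXY] with x hx
            intro h
            change X x ≠ F (rudCell n (N + K) (T x) / n ^ N) at h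
            rw [rudCell_div n K N hn0, hx] at h
            exact h
        _ ≤ μ.map T {y | Y y ≠ F (rudCell n K y)} := Measure.le_map_apply (rud_smul_meas n).aemeasurable _
        _ ≤ _ := by rw [hinv]; exact hKF
    rw [measureReal_def]
    exact ENNReal.toReal_le_of_le_ofReal he0.le h1
  have hstep : ∀ N, rudH μ (Z (N + 1)) ≤ rudH μ (Z N) + η := by
    intro N
    have hm : rudH μ (Z (N + 1)) ≤ rudH μ (fun x => (X x, Z N (T x))) := by
      apply rudH_mono
      · rintro ⟨s, z⟩
        have : (fun x => (X x, Z N (T x))) ⁻¹' {(s, z)} = X ⁻¹' {s} ∩ (fun x => Z N (T x)) ⁻¹' {z} := by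
          ext x; simp
        rw [this]
        exact (hX s).inter (hZT N z)
      · intro x y hxy
        simp only [X, Z, Prod.mk.injEq, Fin.mk.injEq] at hxy ⊢
        obtain ⟨⟨h1, h2⟩, h3, h4⟩ := hxy
        refine ⟨?_, ?_⟩
        · funext i
          refine Fin.cases ?_ (fun j => ?_) i
          · simpa using h1
          · have := congrFun h3 j
            simpa only [Fin.val_succ, Function.iterate_succ_apply] using this
        · have e1 : N + 1 + K = (N + K) + 1 := by ring
          rw [e1, rudCell_succ, rudCell_succ n _ y, h2]
          have h4' : rudCell n (N + K) (n • x) = rudCell n (N + K) (n • y) := h4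
          rw [h4']
    have hgb := rud_gibbs μ X hX (fun x => Z N (T x)) (hZT N) (fun z => F ((z.2 : ℕ) / n ^ N)) δ hδ hδ1
    rw [hlog, hHT] at hgb
    have hb : μ.real {x | X x ≠ F (rudCell n (N + K) (T x) / n ^ N)} * L ≤ η / 2 := by
      calc _ ≤ e * L := mul_le_mul_of_nonneg_right (hbad N) hL0
        _ ≤ e * (L + 1) := by nlinarith
        _ = η / 2 := by rw [he]; field_simp
    have hb' : μ.real {x | X x ≠ (fun z : (Fin N → S) × Fin (n ^ (N + K)) => F ((z.2 : ℕ) / n ^ N)) (Z N (T x))} * L ≤ η / 2 := hb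
    linarith
  refine ⟨rudH μ (Z 0), fun N => ?_⟩
  have hN : rudH μ (Z N) ≤ rudH μ (Z 0) + N * η := by
    induction N with
    | zero => simp
    | succ N ih =>
      have := hstep N
      push_cast
      linarith
  refine le_trans ?_ hN
  apply rudH_mono _ _ (hZ N)
  intro x y hxy
  exact congrArg Prod.fst hxy

theorem rud_ent_zero (n : ℕ) (hn : 2 ≤ n) (μ : Measure UnitAddCircle) [IsProbabilityMeasure μ]
    (hinv : Measure.map (fun x : UnitAddCircle => n • x) μ = μ)
    (hg : ∀ᵐ x ∂μ, rudG n μ x = 1)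
    (hent : 0 < ksEntropy (fun x : UnitAddCircle => n • x) μ) : False := by
  classical
  unfold ksEntropy at hent
  simp only [lt_iSup_iff] at hent
  obtain ⟨m0, P, ⟨hPm, hPd, -⟩, hpos⟩ := hent
  set T : UnitAddCircle → UnitAddCircle := fun x => n • x with hTdef
  let p : UnitAddCircle → Option (Fin m0) := fun x => if h : ∃ i, x ∈ P i then some h.choose else none
  have hpsome : ∀ x i, p x = some i ↔ x ∈ P i := by
    intro x i
    by_cases h : ∃ i, x ∈ P i
    · have hp : p x = some h.choose := dif_pos h
      rw [hp, Option.some_inj]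
      constructor
      · intro hi; rw [← hi]; exact h.choose_spec
      · intro hi
        by_contra hne
        exact Set.disjoint_left.mp (hPd hne) h.choose_spec hi
    · have hp : p x = none := dif_neg h
      rw [hp]
      simp only [reduceCtorEq, false_iff]
      exact fun hi => h ⟨i, hi⟩
  have hp : ∀ s, MeasurableSet (p ⁻¹' {s}) := by
    have hs : ∀ i, p ⁻¹' {some i} = P i := fun i => by ext x; exact hpsome x i
    intro s
    cases s with
    | some i => rw [hs]; exact hPm i
    | none =>
      have : p ⁻¹' {none} = (⋃ i, P i)ᶜ := by
        ext x
        simp only [Set.mem_preimage, Set.mem_singleton_iff, Set.mem_compl_iff, Set.mem_iUnion, not_exists]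
        simp only [← hpsome, Option.eq_none_iff_forall_ne_some]
      rw [this]
      exact (MeasurableSet.iUnion hPm).compl
  have hle : ∀ N, ∑ f, Real.negMulLog ((μ (refinedPartition T P N f)).toReal) ≤
      rudH μ (fun x (i : Fin N) => p (T^[(i : ℕ)] x)) := by
    intro N
    unfold rudH
    have hinj : Function.Injective (fun (f : Fin N → Fin m0) (i : Fin N) => some (f i)) := by
      intro f g h
      funext i
      exact Option.some_injective _ (congrFun h i)
    have e1 : ∀ f : Fin N → Fin m0, (μ (refinedPartition T P N f)).toReal =
        μ.real ((fun x (i : Fin N) => p (T^[(i : ℕ)] x)) ⁻¹' {fun i => some (f i)}) := by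
      intro f
      rw [measureReal_def]
      congr 2
      ext x
      simp [refinedPartition, funext_iff, hpsome]
    simp only [e1]
    rw [← Finset.sum_image (s := Finset.univ) (g := fun (f : Fin N → Fin m0) (i : Fin N) => some (f i))
      (f := fun k => Real.negMulLog (μ.real ((fun x (i : Fin N) => p (T^[(i : ℕ)] x)) ⁻¹' {k})))
      (fun a _ b _ h => hinj h)]
    apply Finset.sum_le_sum_of_subset_of_nonneg (Finset.subset_univ _)
    intro k _ _
    exact Real.negMulLog_nonneg measureReal_nonneg measureReal_le_one
  obtain ⟨c, hc0, hc⟩ := ENNReal.lt_iff_exists_nnreal_btwn.mp hpos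
  have hc0' : (0 : ℝ) < c := by exact_mod_cast hc0
  obtain ⟨C, hC⟩ := rud_ent_bound n hn μ hinv hg p hp (c / 2) (by positivity)
  have hb : ∀ N : ℕ, (c : ℝ) * (N + 1) ≤ C + (N + 1) * (c / 2) := by
    intro N
    have h1 := hc.le.trans (iInf_le _ N)
    rw [ENNReal.le_div_iff_mul_le (by simp) (Or.inl (by finiteness))] at h1
    unfold finPartitionEntropy at h1
    have h2 : (c : ℝ≥0∞) * (N + 1) = ENNReal.ofReal (c * (N + 1)) := by
      rw [ENNReal.ofReal_mul (by positivity), ENNReal.ofReal_coe_nnreal]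
      congr 1
      rw [ENNReal.ofReal_add (by positivity) (by positivity)]
      simp
    rw [h2] at h1
    have hpos' : 0 < (c : ℝ) * (N + 1) := by positivity
    have h3 := (ENNReal.ofReal_le_ofReal_iff').mp h1
    have h4 : (c : ℝ) * (N + 1) ≤ ∑ f, Real.negMulLog ((μ (refinedPartition T P (N + 1) f)).toReal) := by
      rcases h3 with h | h
      · exact h
      · exact absurd hpos' (not_lt.mpr h)
    have h5 := hC (N + 1)
    push_cast at h5
    exact (h4.trans (hle (N + 1))).trans h5
  obtain ⟨N, hN⟩ := exists_nat_gt (C / (c / 2))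
  have := hb N
  rw [div_lt_iff₀ (by positivity)] at hN
  nlinarith


theorem rud_ae_iff (k : ℕ) (μ : Measure UnitAddCircle) [IsProbabilityMeasure μ]
    (hinv : Measure.map (fun x : UnitAddCircle => k • x) μ = μ) (A : Set UnitAddCircle)
    (hA : MeasurableSet A) (h : (∀ᵐ x ∂μ, x ∈ A → k • x ∈ A) ∨ (∀ᵐ x ∂μ, k • x ∈ A → x ∈ A)) :
    ∀ᵐ x ∂μ, (k • x ∈ A ↔ x ∈ A) := by
  have hT : MeasurePreserving (fun x : UnitAddCircle => k • x) μ μ := ⟨rud_smul_meas k, hinv⟩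
  have hmeq : μ ((fun x : UnitAddCircle => k • x) ⁻¹' A) = μ A := hT.measure_preimage hA.nullMeasurableSet
  have hBm : MeasurableSet ((fun x : UnitAddCircle => k • x) ⁻¹' A) := rud_smul_meas k hA
  rcases h with h | h
  · have := ae_eq_of_ae_subset_of_measure_ge (μ := μ) (s := A) (t := (fun x : UnitAddCircle => k • x) ⁻¹' A)
      h hmeq.le hA.nullMeasurableSet (measure_ne_top _ _)
    filter_upwards [this.mem_iff] with x hx using hx.symm
  · have := ae_eq_of_ae_subset_of_measure_ge (μ := μ) (t := A) (s := (fun x : UnitAddCircle => k • x) ⁻¹' A)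
      h hmeq.ge hBm.nullMeasurableSet (measure_ne_top _ _)
    filter_upwards [this.mem_iff] with x hx using hx

theorem rud_ae_iff_pow (k : ℕ) (μ : Measure UnitAddCircle) [IsProbabilityMeasure μ]
    (hinv : Measure.map (fun x : UnitAddCircle => k • x) μ = μ) (A : Set UnitAddCircle)
    (h : ∀ᵐ x ∂μ, (k • x ∈ A ↔ x ∈ A)) (i : ℕ) :
    (∀ᵐ x ∂μ, (k ^ i • x ∈ A ↔ x ∈ A)) ∧ Measure.map (fun x : UnitAddCircle => k ^ i • x) μ = μ := by
  have hT : MeasurePreserving (fun x : UnitAddCircle => k • x) μ μ := ⟨rud_smul_meas k, hinv⟩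
  induction i with
  | zero => simp
  | succ i ih =>
    obtain ⟨h1, h2⟩ := ih
    constructor
    · have h3 := hT.quasiMeasurePreserving.ae h1
      filter_upwards [h, h3] with x hx hx3
      rw [pow_succ, mul_smul, hx3, hx]
    · have hTi : MeasurePreserving (fun x : UnitAddCircle => k ^ i • x) μ μ := ⟨rud_smul_meas _, h2⟩
      have := (hTi.comp hT).map_eq
      convert this using 2
      funext x
      simp [pow_succ, mul_smul]

theorem rud_dichotomy (m n : ℕ) (μ : Measure UnitAddCircle) [IsProbabilityMeasure μ]
    (hinvn : Measure.map (fun x : UnitAddCircle => n • x) μ = μ)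
    (hinvm : Measure.map (fun x : UnitAddCircle => m • x) μ = μ)
    (herg : ∀ A : Set UnitAddCircle, MeasurableSet A →
      (fun x : UnitAddCircle => n • x) ⁻¹' A = A →
      (fun x : UnitAddCircle => m • x) ⁻¹' A = A → μ A = 0 ∨ μ A = 1)
    (A : Set UnitAddCircle) (hA : MeasurableSet A)
    (h1 : ∀ᵐ x ∂μ, (n • x ∈ A ↔ x ∈ A)) (h2 : ∀ᵐ x ∂μ, (m • x ∈ A ↔ x ∈ A)) :
    μ A = 0 ∨ μ A = 1 := by
  have hall : ∀ᵐ x ∂μ, ∀ i j : ℕ, ((n ^ i * m ^ j) • x ∈ A ↔ x ∈ A) := by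
    rw [ae_all_iff]; intro i
    rw [ae_all_iff]; intro j
    obtain ⟨a1, -⟩ := rud_ae_iff_pow n μ hinvn A h1 i
    obtain ⟨b1, b2⟩ := rud_ae_iff_pow m μ hinvm A h2 j
    have hT : MeasurePreserving (fun x : UnitAddCircle => m ^ j • x) μ μ := ⟨rud_smul_meas _, b2⟩
    filter_upwards [b1, hT.quasiMeasurePreserving.ae a1] with x hx hx'
    rw [mul_smul, hx', hx]
  set A' : Set UnitAddCircle := {x | ∃ i0 j0 : ℕ, ∀ i ≥ i0, ∀ j ≥ j0, (n ^ i * m ^ j) • x ∈ A} with hA'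
  have hA'm : MeasurableSet A' := by
    have : A' = ⋃ i0 : ℕ, ⋃ j0 : ℕ, ⋂ i : ℕ, ⋂ (_ : i ≥ i0), ⋂ j : ℕ, ⋂ (_ : j ≥ j0),
        (fun x : UnitAddCircle => (n ^ i * m ^ j) • x) ⁻¹' A := by
      ext x; simp [hA']
    rw [this]
    exact MeasurableSet.iUnion fun i0 => MeasurableSet.iUnion fun j0 => MeasurableSet.iInter fun i =>
      MeasurableSet.iInter fun _ => MeasurableSet.iInter fun j => MeasurableSet.iInter fun _ =>
      rud_smul_meas _ hA
  have hAA' : μ A' = μ A := by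
    apply measure_congr
    filter_upwards [hall] with x hx
    apply propext
    constructor
    · rintro ⟨i0, j0, h⟩
      exact (hx i0 j0).mp (h i0 le_rfl j0 le_rfl)
    · intro h
      exact ⟨0, 0, fun i _ j _ => (hx i j).mpr h⟩
  rw [← hAA']
  have key1 : ∀ (x : UnitAddCircle) (i j : ℕ), (n ^ i * m ^ j) • n • x = (n ^ (i + 1) * m ^ j) • x := by
    intro x i j
    rw [← mul_smul]; congr 1; ring
  have key2 : ∀ (x : UnitAddCircle) (i j : ℕ), (n ^ i * m ^ j) • m • x = (n ^ i * m ^ (j + 1)) • x := by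
    intro x i j
    rw [← mul_smul]; congr 1; ring
  refine herg A' hA'm ?_ ?_
  · ext x
    constructor
    · rintro ⟨i0, j0, h⟩
      refine ⟨i0 + 1, j0, fun i hi j hj => ?_⟩
      obtain ⟨i', rfl⟩ : ∃ i', i = i' + 1 := ⟨i - 1, by omega⟩
      have := h i' (by omega) j hj
      simpa only [key1] using this
    · rintro ⟨i0, j0, h⟩
      refine ⟨i0, j0, fun i hi j hj => ?_⟩
      have := h (i + 1) (by omega) j hj
      simpa only [key1] using this
  · ext x
    constructor
    · rintro ⟨i0, j0, h⟩
      refine ⟨i0, j0 + 1, fun i hi j hj => ?_⟩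
      obtain ⟨j', rfl⟩ : ∃ j', j = j' + 1 := ⟨j - 1, by omega⟩
      have := h i hi j' (by omega)
      simpa only [key2] using this
    · rintro ⟨i0, j0, h⟩
      refine ⟨i0, j0, fun i hi j hj => ?_⟩
      have := h i hi (j + 1) (by omega)
      simpa only [key2] using this

theorem rud_G_one (n : ℕ) (μ : Measure UnitAddCircle) [IsProbabilityMeasure μ]
    (hinv : Measure.map (fun x : UnitAddCircle => n • x) μ = μ)
    (h : ∀ᵐ x ∂μ, rudInf n μ x ≠ 0) : ∀ᵐ x ∂μ, rudG n μ x = 1 := by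
  have hT : MeasurePreserving (fun x : UnitAddCircle => n • x) μ μ := ⟨rud_smul_meas n, hinv⟩
  have hint : ∫⁻ x, rudInf n μ (n • x) ∂μ = ∫⁻ x, rudInf n μ x ∂μ :=
    hT.lintegral_comp (rudInf_meas n μ)
  have hfin : ∫⁻ x, rudInf n μ x ∂μ ≠ ⊤ := by
    have : ∫⁻ x, rudInf n μ x ∂μ ≤ ∫⁻ _, 1 ∂μ := lintegral_mono (rudInf_le_one n μ)
    exact ne_top_of_le_ne_top (by simp) this
  have heq := ae_eq_of_ae_le_of_lintegral_le (μ := μ) (f := rudInf n μ)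
    (g := fun x => rudInf n μ (n • x)) (Filter.Eventually.of_forall (rudInf_le n μ)) hfin
    ((rudInf_meas n μ).comp (rud_smul_meas n)).aemeasurable hint.le
  filter_upwards [h, heq] with x hx hxe
  have hle := rudInf_le_one n μ x
  have e1 := rudInf_eq n μ x
  have hxe' : rudInf n μ (n • x) = rudInf n μ x := hxe.symm
  rw [hxe'] at e1
  have htop : rudInf n μ x ≠ ⊤ := ne_top_of_le_ne_top ENNReal.one_ne_top hle
  have : 1 * rudInf n μ x = rudG n μ x * rudInf n μ x := by rw [one_mul]; exact e1
  exact ((ENNReal.mul_left_inj hx htop).mp this).symm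

/-- Rudolph: Let `m` and `n` be relatively prime integers, each at least 2,
and let `μ` be a Borel probability measure on `𝕋` invariant and ergodic under the
multiplicative semigroup generated by `×n` and `×m`.  If `h_μ(×n) > 0` then `μ` is
Lebesgue measure on `𝕋`. -/
theorem rudolph_times_n_times_m_positive_entropy
    (m n : ℕ) (hm : 2 ≤ m) (hn : 2 ≤ n) (hmn : Nat.Coprime m n)
    (μ : Measure UnitAddCircle) [IsProbabilityMeasure μ]
    (hinvn : Measure.map (fun x : UnitAddCircle => n • x) μ = μ)
    (hinvm : Measure.map (fun x : UnitAddCircle => m • x) μ = μ)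
    (herg : ∀ A : Set UnitAddCircle, MeasurableSet A →
      (fun x : UnitAddCircle => n • x) ⁻¹' A = A →
      (fun x : UnitAddCircle => m • x) ⁻¹' A = A → μ A = 0 ∨ μ A = 1)
    (hent : 0 < ksEntropy (fun x : UnitAddCircle => n • x) μ) :
    μ = volume := by
  have hn0 : n ≠ 0 := by omega
  set A : Set UnitAddCircle := {x | rudInf n μ x ≠ 0} with hAdef
  have hA : MeasurableSet A := (rudInf_meas n μ (measurableSet_singleton 0)).compl
  have h1 : ∀ᵐ x ∂μ, (n • x ∈ A ↔ x ∈ A) := by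
    apply rud_ae_iff n μ hinvn A hA
    left
    refine Filter.Eventually.of_forall fun x hx h0 => hx ?_
    exact le_antisymm ((rudInf_le n μ x).trans h0.le) zero_le
  have h2 : ∀ᵐ x ∂μ, (m • x ∈ A ↔ x ∈ A) := by
    apply rud_ae_iff m μ hinvm A hA
    right
    exact rudInv_m m n hn0 hmn μ hinvn hinvm
  rcases rud_dichotomy m n μ hinvn hinvm herg A hA h1 h2 with h | h
  · apply rud_host m n hm hn hmn μ hinvn hinvm
    have h' : ∀ᵐ x ∂μ, x ∉ A := measure_eq_zero_iff_ae_notMem.mp h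
    filter_upwards [h'] with x hx
    exact not_not.mp hx
  · exfalso
    refine rud_ent_zero n hn μ hinvn (rud_G_one n μ hinvn ?_) hent
    exact (prob_compl_eq_zero_iff hA).mpr h
end
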